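/- Suppose Q(u) ≥ 0 for every u ∈ C_c^∞(Ω) and Q admits a ground state v. Then for every nonempty open set B with compact closure contained in Ω there exists a continuous function W : Ω → ℝ with W > 0 everywhere such that ∫_Ω W|u|^p dx ≤ Q(u) + ∫_B |u|^p dx for all u ∈ C_c^∞(Ω). -/

import Mathlib

open MeasureTheory Filter
open scoped RealInnerProductSpace Topology

noncomputable section

/-- Euclidean space `ℝ^d`. -/
abbrev Euc (d : ℕ) := EuclideanSpace ℝ (Fin d)

/-- A test function on `Ω`: smooth with compact support contained in `Ω`. -/
def IsTestFun {d : ℕ} (Ω : Set (Euc d)) (u : Euc d → ℝ) : Prop :=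
  ContDiff ℝ (⊤ : ℕ∞) u ∧ HasCompactSupport u ∧ tsupport u ⊆ Ω

/-- The energy functional `Q(u) = ∫_Ω (|∇u|^p + V |u|^p) dx`. -/
def energyQ {d : ℕ} (Ω : Set (Euc d)) (V : Euc d → ℝ) (p : ℝ) (u : Euc d → ℝ) : ℝ :=
  ∫ x in Ω, (‖gradient u x‖ ^ p + V x * |u x| ^ p)

/-- `V` is measurable and bounded on every compact subset of `Ω`. -/
def LocBddPotential {d : ℕ} (Ω : Set (Euc d)) (V : Euc d → ℝ) : Prop :=
  Measurable V ∧ ∀ K : Set (Euc d), K ⊆ Ω → IsCompact K → ∃ C : ℝ, ∀ x ∈ K, |V x| ≤ C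

/-- A positive supersolution of `Q'(u) = 0` in `Ω`. -/
def IsPositiveSupersolution {d : ℕ} (Ω : Set (Euc d)) (V : Euc d → ℝ) (p : ℝ)
    (v : Euc d → ℝ) : Prop :=
  ContDiffOn ℝ 1 v Ω ∧ (∀ x ∈ Ω, 0 < v x) ∧
    ∀ φ : Euc d → ℝ, IsTestFun Ω φ → (∀ x, 0 ≤ φ x) →
      0 ≤ ∫ x in Ω, (‖gradient v x‖ ^ (p - 2) * ⟪gradient v x, gradient φ x⟫
            + V x * v x ^ (p - 1) * φ x)

/-- A positive (weak) solution of `Q'(u) = 0` in `Ω`. -/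
def IsPositiveSolution {d : ℕ} (Ω : Set (Euc d)) (V : Euc d → ℝ) (p : ℝ)
    (v : Euc d → ℝ) : Prop :=
  ContDiffOn ℝ 1 v Ω ∧ (∀ x ∈ Ω, 0 < v x) ∧
    ∀ φ : Euc d → ℝ, IsTestFun Ω φ →
      (∫ x in Ω, (‖gradient v x‖ ^ (p - 2) * ⟪gradient v x, gradient φ x⟫
            + V x * v x ^ (p - 1) * φ x)) = 0

/-- A null sequence for the functional `Q`. -/
def IsNullSequence {d : ℕ} (Ω : Set (Euc d)) (V : Euc d → ℝ) (p : ℝ)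
    (u : ℕ → Euc d → ℝ) : Prop :=
  (∀ k, IsTestFun Ω (u k)) ∧ (∀ k x, 0 ≤ u k x) ∧
    ∃ B : Set (Euc d), IsOpen B ∧ IsCompact (closure B) ∧ closure B ⊆ Ω ∧
      (∀ k, (∫ x in B, u k x ^ p) = 1) ∧
      Tendsto (fun k => energyQ Ω V p (u k)) atTop (𝓝 0)

/-- A ground state of `Q`: a positive `C¹` function on `Ω` which is the limit in
`L^p_loc(Ω)` of a null sequence. -/
def IsGroundState {d : ℕ} (Ω : Set (Euc d)) (V : Euc d → ℝ) (p : ℝ)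
    (v : Euc d → ℝ) : Prop :=
  ContDiffOn ℝ 1 v Ω ∧ (∀ x ∈ Ω, 0 < v x) ∧
    ∃ u : ℕ → Euc d → ℝ, IsNullSequence Ω V p u ∧
      ∀ K : Set (Euc d), K ⊆ Ω → IsCompact K →
        Tendsto (fun k => ∫ x in K, |u k x - v x| ^ p) atTop (𝓝 0)

/-- `Q` has a weighted spectral gap (is strictly positive) in `Ω`. -/
def HasSpectralGap {d : ℕ} (Ω : Set (Euc d)) (V : Euc d → ℝ) (p : ℝ) : Prop :=
  ∃ W : Euc d → ℝ, ContinuousOn W Ω ∧ (∀ x ∈ Ω, 0 < W x) ∧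
    ∀ u : Euc d → ℝ, IsTestFun Ω u → (∫ x in Ω, W x * |u x| ^ p) ≤ energyQ Ω V p u

/-- `c_B`: the infimum of `Q(u)` over test functions with `∫_B |u|^p = 1`. -/
def cB {d : ℕ} (Ω B : Set (Euc d)) (V : Euc d → ℝ) (p : ℝ) : ℝ :=
  sInf { q : ℝ | ∃ u : Euc d → ℝ, IsTestFun Ω u ∧ (∫ x in B, |u x| ^ p) = 1 ∧
    q = energyQ Ω V p u }

/-- The Picone Lagrangian `L(u,v)`. -/
def piconeL {d : ℕ} (p : ℝ) (u v : Euc d → ℝ) (x : Euc d) : ℝ :=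
  ‖gradient u x‖ ^ p + (p - 1) * (u x / v x) ^ p * ‖gradient v x‖ ^ p
    - p * (u x / v x) ^ (p - 1) *
        (‖gradient v x‖ ^ (p - 2) * ⟪gradient u x, gradient v x⟫)


theorem norm_rpow_convex {E : Type*} [NormedAddCommGroup E] [NormedSpace ℝ E] {p : ℝ} (hp : 1 < p)
    (X Y : E) {l m : ℝ} (hl : 0 ≤ l) (hm : 0 ≤ m) (h : l + m = 1) :
    ‖l • X + m • Y‖ ^ p ≤ l * ‖X‖ ^ p + m * ‖Y‖ ^ p := by
  have h1 : ‖l • X + m • Y‖ ≤ l * ‖X‖ + m * ‖Y‖ := by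
    refine (norm_add_le _ _).trans ?_
    rw [norm_smul, norm_smul, Real.norm_of_nonneg hl, Real.norm_of_nonneg hm]
  have h2 := (convexOn_rpow hp.le).2 (x := ‖X‖) (y := ‖Y‖) (norm_nonneg _) (norm_nonneg _) hl hm h
  simp only [smul_eq_mul] at h2
  exact (Real.rpow_le_rpow (norm_nonneg _) h1 (by linarith)).trans h2

/-- midpoint gap -/
def gapHalf {d : ℕ} (p : ℝ) (X Y : Euc d) : ℝ :=
  (‖X‖ ^ p + ‖Y‖ ^ p) / 2 - ‖(1 / 2 : ℝ) • X + (1 / 2 : ℝ) • Y‖ ^ p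

theorem gapHalf_nonneg {d : ℕ} {p : ℝ} (hp : 1 < p) (X Y : Euc d) : 0 ≤ gapHalf p X Y := by
  have := norm_rpow_convex hp X Y (l := 1/2) (m := 1/2) (by norm_num) (by norm_num) (by norm_num)
  unfold gapHalf; linarith

theorem gapHalf_pos {d : ℕ} {p : ℝ} (hp : 1 < p) (X Y : Euc d) (h : X ≠ Y) :
    0 < gapHalf p X Y := by
  unfold gapHalf
  have hn : ‖(1 / 2 : ℝ) • X + (1 / 2 : ℝ) • Y‖ = ‖X + Y‖ / 2 := by
    rw [← smul_add, norm_smul]; norm_num; ring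
  rw [hn]
  by_cases hs : SameRay ℝ X Y
  · have hne : ‖X‖ ≠ ‖Y‖ := fun h' => h ((sameRay_iff_of_norm_eq h').1 hs)
    rw [sameRay_iff_norm_add.1 hs]
    have h2 := (strictConvexOn_rpow hp).2 (norm_nonneg X) (norm_nonneg Y) hne
      (show (0:ℝ) < 1/2 by norm_num) (show (0:ℝ) < 1/2 by norm_num) (by norm_num)
    simp only [smul_eq_mul] at h2
    have e : 1 / 2 * ‖X‖ + 1 / 2 * ‖Y‖ = (‖X‖ + ‖Y‖) / 2 := by ring
    rw [e] at h2; linarith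
  · have hlt : ‖X + Y‖ < ‖X‖ + ‖Y‖ := lt_of_le_of_ne (norm_add_le _ _)
      (fun h' => hs (sameRay_iff_norm_add.2 h'))
    have h2 := (convexOn_rpow hp.le).2 (norm_nonneg X) (norm_nonneg Y)
      (show (0:ℝ) ≤ 1/2 by norm_num) (show (0:ℝ) ≤ 1/2 by norm_num) (by norm_num)
    simp only [smul_eq_mul] at h2
    have e : 1 / 2 * ‖X‖ + 1 / 2 * ‖Y‖ = (‖X‖ + ‖Y‖) / 2 := by ring
    rw [e] at h2
    have h3 : (‖X + Y‖ / 2) ^ p < ((‖X‖ + ‖Y‖) / 2) ^ p :=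
      Real.rpow_lt_rpow (by positivity) (by linarith) (by linarith)
    linarith

theorem gapHalf_smul {d : ℕ} {p : ℝ} (X Y : Euc d) {c : ℝ} (hc : 0 ≤ c) :
    gapHalf p (c • X) (c • Y) = c ^ p * gapHalf p X Y := by
  unfold gapHalf
  have : (1 / 2 : ℝ) • c • X + (1 / 2 : ℝ) • c • Y = c • ((1 / 2 : ℝ) • X + (1 / 2 : ℝ) • Y) := by
    module
  rw [this, norm_smul, norm_smul, norm_smul, Real.norm_of_nonneg hc,
    Real.mul_rpow hc (norm_nonneg _), Real.mul_rpow hc (norm_nonneg _),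
    Real.mul_rpow hc (norm_nonneg _)]
  ring

theorem gap_ineq {d : ℕ} {p : ℝ} (hp : 1 < p) {ε : ℝ} (hε : 0 < ε) :
    ∃ C : ℝ, 0 < C ∧ ∀ X Y : Euc d, ‖X - Y‖ ^ p ≤ C * gapHalf p X Y + ε * ‖X‖ ^ p := by
  -- choose κ ∈ (0, 1/2] with (2κ)^p ≤ ε
  obtain ⟨κ, hκ, hκ2, hκε⟩ : ∃ κ : ℝ, 0 < κ ∧ κ ≤ 1/2 ∧ (2 * κ) ^ p ≤ ε := by
    refine ⟨min (1/2) (ε ^ (1/p) / 2), by positivity, min_le_left _ _, ?_⟩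
    have : 2 * min (1/2) (ε ^ (1/p) / 2) ≤ ε ^ (1/p) := by
      have := min_le_right (1/2) (ε ^ (1/p) / 2); linarith
    calc _ ≤ (ε ^ (1/p)) ^ p := Real.rpow_le_rpow (by positivity) this (by linarith)
      _ = ε := by rw [← Real.rpow_mul hε.le]; field_simp; simp
  let S : Set (Euc d × Euc d) :=
    (Metric.closedBall 0 1 ×ˢ Metric.closedBall 0 1) ∩ {q | κ ≤ ‖q.1 - q.2‖}
  have hSc : IsCompact S := by
    refine IsCompact.inter_right ((isCompact_closedBall _ _).prod (isCompact_closedBall _ _)) ?_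
    exact isClosed_le continuous_const (by fun_prop)
  have hcont : Continuous (fun q : Euc d × Euc d => gapHalf p q.1 q.2) := by
    unfold gapHalf
    have hp0 : 0 ≤ p := by linarith
    refine Continuous.sub (Continuous.div_const (Continuous.add ?_ ?_) _) ?_ <;>
    · refine Continuous.rpow_const (by fun_prop) (fun _ => Or.inr hp0)
  obtain ⟨δ, hδ, hδS⟩ : ∃ δ : ℝ, 0 < δ ∧ ∀ q ∈ S, δ ≤ gapHalf p q.1 q.2 := by
    by_cases hne : S.Nonempty
    · obtain ⟨q, hq, hmin⟩ := hSc.exists_isMinOn hne hcont.continuousOn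
      refine ⟨gapHalf p q.1 q.2, gapHalf_pos hp _ _ ?_, fun r hr => hmin hr⟩
      intro h
      have : κ ≤ ‖q.1 - q.2‖ := hq.2
      rw [h] at this; simp at this; linarith
    · exact ⟨1, one_pos, fun q hq => (hne ⟨q, hq⟩).elim⟩
  refine ⟨2 ^ p / δ, by positivity, fun X Y => ?_⟩
  set R := max ‖X‖ ‖Y‖ with hR
  have hR0 : 0 ≤ R := le_max_of_le_left (norm_nonneg _)
  have hXR : ‖X‖ ≤ R := le_max_left _ _
  have hYR : ‖Y‖ ≤ R := le_max_right _ _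
  have hp0 : 0 < p := by linarith
  by_cases hc : κ * R ≤ ‖X - Y‖
  · by_cases hRz : R = 0
    · have hX : X = 0 := by rw [← norm_le_zero_iff]; linarith
      have hY : Y = 0 := by rw [← norm_le_zero_iff]; linarith
      subst hX hY
      simp only [sub_zero, norm_zero]
      have := gapHalf_nonneg hp (0 : Euc d) 0
      rw [Real.zero_rpow hp0.ne']
      positivity
    · have hRp : 0 < R := lt_of_le_of_ne hR0 (Ne.symm hRz)
      have hin : (R⁻¹ • X, R⁻¹ • Y) ∈ S := by
        refine ⟨⟨?_, ?_⟩, ?_⟩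
        · simp only [mem_closedBall_zero_iff, norm_smul, norm_inv, Real.norm_of_nonneg hR0]
          rw [inv_mul_le_iff₀ hRp]; simpa using hXR
        · simp only [mem_closedBall_zero_iff, norm_smul, norm_inv, Real.norm_of_nonneg hR0]
          rw [inv_mul_le_iff₀ hRp]; simpa using hYR
        · simp only [Set.mem_ofPred_eq]
          rw [← smul_sub, norm_smul, norm_inv, Real.norm_of_nonneg hR0, le_inv_mul_iff₀ hRp]
          linarith
      have h1 := hδS _ hin
      simp only at h1
      rw [gapHalf_smul _ _ (by positivity), Real.inv_rpow hR0,
        le_inv_mul_iff₀ (by positivity)] at h1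
      have h2 : ‖X - Y‖ ^ p ≤ 2 ^ p * R ^ p := by
        rw [← Real.mul_rpow (by norm_num) hR0]
        refine Real.rpow_le_rpow (norm_nonneg _) ?_ hp0.le
        exact (norm_sub_le _ _).trans (by linarith)
      have h3 : 2 ^ p * R ^ p ≤ 2 ^ p / δ * gapHalf p X Y := by
        rw [div_mul_eq_mul_div, le_div_iff₀ hδ, mul_assoc]
        exact mul_le_mul_of_nonneg_left h1 (by positivity)
      have h4 : 0 ≤ ε * ‖X‖ ^ p := by positivity
      linarith
  · push Not at hc
    have hR2 : R ≤ 2 * ‖X‖ := by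
      have h1 : R ≤ ‖X‖ + ‖X - Y‖ := by
        refine max_le (by linarith [norm_nonneg (X - Y)]) ?_
        have := norm_sub_le X (X - Y)
        simpa using this
      nlinarith
    have h2 : ‖X - Y‖ ^ p ≤ (2 * κ) ^ p * ‖X‖ ^ p := by
      rw [← Real.mul_rpow (by positivity) (norm_nonneg _)]
      refine Real.rpow_le_rpow (norm_nonneg _) ?_ hp0.le
      nlinarith
    have h3 : (2 * κ) ^ p * ‖X‖ ^ p ≤ ε * ‖X‖ ^ p :=
      mul_le_mul_of_nonneg_right hκε (by positivity)
    have h4 := gapHalf_nonneg hp X Y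
    have : 0 ≤ 2 ^ p / δ * gapHalf p X Y := by positivity
    linarith

/-- Jensen gap with weights dominates `2 λ μ` times the midpoint gap -/
theorem gap_weighted {d : ℕ} {p : ℝ} (hp : 1 < p) (X Y : Euc d) {l m : ℝ} (hl : 0 ≤ l) (hm : 0 ≤ m)
    (h : l + m = 1) :
    2 * (l * m) * gapHalf p X Y ≤ l * ‖X‖ ^ p + m * ‖Y‖ ^ p - ‖l • X + m • Y‖ ^ p := by
  have key : ∀ (X Y : Euc d) {l m : ℝ}, 0 ≤ l → 0 ≤ m → l + m = 1 → l ≤ m →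
      2 * (l * m) * gapHalf p X Y ≤ l * ‖X‖ ^ p + m * ‖Y‖ ^ p - ‖l • X + m • Y‖ ^ p := by
    intro X Y l m hl hm h hlm
    have h1 := norm_rpow_convex hp ((1 / 2 : ℝ) • X + (1 / 2 : ℝ) • Y) Y (l := 2 * l)
      (m := 1 - 2 * l) (by linarith) (by linarith) (by ring)
    have e : (2 * l) • ((1 / 2 : ℝ) • X + (1 / 2 : ℝ) • Y) + (1 - 2 * l) • Y = l • X + m • Y := by
      have : m = 1 - l := by linarith
      subst this; module
    rw [e] at h1
    have h2 := gapHalf_nonneg hp X Y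
    have h3 : 2 * (l * m) * gapHalf p X Y ≤ 2 * l * gapHalf p X Y := by
      refine mul_le_mul_of_nonneg_right ?_ h2
      nlinarith
    unfold gapHalf at *
    have : m = 1 - l := by linarith
    subst this
    linarith
  rcases le_total l m with hlm | hlm
  · exact key X Y hl hm h hlm
  · have := key Y X hm hl (by linarith) hlm
    have e : gapHalf p Y X = gapHalf p X Y := by
      unfold gapHalf; rw [add_comm (‖Y‖ ^ p), add_comm ((1 / 2 : ℝ) • Y)]
    rw [e, add_comm (m • Y)] at this
    linarith [mul_comm m l ▸ this]

/-- pointwise deficit inequality -/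
theorem deficit_ineq {d : ℕ} {p : ℝ} (hp : 1 < p) {ε C : ℝ} (hε : 0 ≤ ε) (hC : 0 ≤ C)
    (hgap : ∀ X Y : Euc d, ‖X - Y‖ ^ p ≤ C * gapHalf p X Y + ε * ‖X‖ ^ p)
    {a b m : ℝ} (ha : 0 < a) (hb : 0 < b) (hm : 0 < m) (hmp : m ^ p = a ^ p + b ^ p)
    (ξ η ζ : Euc d) (hζ : m ^ (p - 1) • ζ = a ^ (p - 1) • ξ + b ^ (p - 1) • η) :
    0 ≤ ‖ξ‖ ^ p + ‖η‖ ^ p - ‖ζ‖ ^ p ∧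
    (a ^ p * b ^ p / (a ^ p + b ^ p)) * ‖a⁻¹ • ξ - b⁻¹ • η‖ ^ p ≤
      C * (‖ξ‖ ^ p + ‖η‖ ^ p - ‖ζ‖ ^ p) + ε * ‖ξ‖ ^ p := by
  have hap : 0 < a ^ p := Real.rpow_pos_of_pos ha _
  have hbp : 0 < b ^ p := Real.rpow_pos_of_pos hb _
  have hmpp : 0 < m ^ p := Real.rpow_pos_of_pos hm _
  set X := a⁻¹ • ξ
  set Y := b⁻¹ • η
  have hX : ‖X‖ ^ p = ‖ξ‖ ^ p / a ^ p := by
    simp only [X]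
    rw [norm_smul, norm_inv, Real.norm_of_nonneg ha.le, Real.mul_rpow (by positivity) (by positivity),
      Real.inv_rpow ha.le]; field_simp
  have hY : ‖Y‖ ^ p = ‖η‖ ^ p / b ^ p := by
    simp only [Y]
    rw [norm_smul, norm_inv, Real.norm_of_nonneg hb.le, Real.mul_rpow (by positivity) (by positivity),
      Real.inv_rpow hb.le]; field_simp
  have hpow : ∀ t : ℝ, 0 < t → t ^ (p - 1) = t ^ p * t⁻¹ := by
    intro t ht; rw [Real.rpow_sub_one ht.ne']; rfl
  have hZ : m⁻¹ • ζ = (a ^ p / m ^ p) • X + (b ^ p / m ^ p) • Y := by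
    have h1 : m⁻¹ • ζ = (m ^ p)⁻¹ • (m ^ (p - 1) • ζ) := by
      rw [smul_smul, hpow m hm]; congr 1; field_simp
    rw [h1, hζ, hpow a ha, hpow b hb]
    simp only [X, Y, smul_add, smul_smul]
    congr 2 <;> field_simp
  have hZn : ‖(a ^ p / m ^ p) • X + (b ^ p / m ^ p) • Y‖ ^ p = ‖ζ‖ ^ p / m ^ p := by
    rw [← hZ, norm_smul, norm_inv, Real.norm_of_nonneg hm.le,
      Real.mul_rpow (by positivity) (by positivity), Real.inv_rpow hm.le]; field_simp
  have hJ := gap_weighted hp X Y (l := a ^ p / m ^ p) (m := b ^ p / m ^ p) (by positivity)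
    (by positivity) (by rw [← add_div, ← hmp]; field_simp)
  rw [hZn, hX, hY] at hJ
  have hJ' : 2 * (a ^ p * b ^ p / m ^ p) * gapHalf p X Y ≤ ‖ξ‖ ^ p + ‖η‖ ^ p - ‖ζ‖ ^ p := by
    have := mul_le_mul_of_nonneg_left hJ hmpp.le
    refine le_of_eq_of_le ?_ (this.trans_eq ?_) <;> field_simp
  have hg0 := gapHalf_nonneg hp X Y
  have h0 : 0 ≤ (a ^ p * b ^ p / m ^ p) * gapHalf p X Y := by positivity
  have hd0 : 0 ≤ ‖ξ‖ ^ p + ‖η‖ ^ p - ‖ζ‖ ^ p := by linarith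
  refine ⟨hd0, ?_⟩
  rw [← hmp]
  have h1 := mul_le_mul_of_nonneg_left (hgap X Y) (show 0 ≤ a ^ p * b ^ p / m ^ p by positivity)
  refine h1.trans ?_
  have h2 : a ^ p * b ^ p / m ^ p * (ε * ‖X‖ ^ p) ≤ ε * ‖ξ‖ ^ p := by
    rw [hX]
    have : a ^ p * b ^ p / m ^ p * (ε * (‖ξ‖ ^ p / a ^ p)) = (b ^ p / m ^ p) * (ε * ‖ξ‖ ^ p) := by
      field_simp
    rw [this]
    refine mul_le_of_le_one_left (by positivity) ?_
    rw [div_le_one hmpp]; linarith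
  have h3 : a ^ p * b ^ p / m ^ p * (C * gapHalf p X Y) ≤ C * (‖ξ‖ ^ p + ‖η‖ ^ p - ‖ζ‖ ^ p) := by
    have : a ^ p * b ^ p / m ^ p * (C * gapHalf p X Y) = C * (a ^ p * b ^ p / m ^ p * gapHalf p X Y) := by
      ring
    rw [this]
    exact mul_le_mul_of_nonneg_left (by linarith) hC
  linarith [mul_add (a ^ p * b ^ p / m ^ p) (C * gapHalf p X Y) (ε * ‖X‖ ^ p)]


theorem gradient_eq_of_fderiv {d : ℕ} {f : Euc d → ℝ} {x g : Euc d}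
    (h : ∀ y, fderiv ℝ f x y = ⟪g, y⟫) : gradient f x = g := by
  refine ext_inner_right ℝ fun y => ?_
  rw [inner_gradient_left, h]

theorem norm_gradient_eq {d : ℕ} (f : Euc d → ℝ) (x : Euc d) :
    ‖gradient f x‖ = ‖fderiv ℝ f x‖ := by
  unfold gradient; exact LinearIsometryEquiv.norm_map _ _

theorem continuous_gradient {d : ℕ} {f : Euc d → ℝ} (hf : ContDiff ℝ (⊤ : ℕ∞) f) :
    Continuous (gradient f) := by
  unfold gradient
  exact (LinearIsometryEquiv.continuous _).comp (hf.continuous_fderiv (by simp))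

theorem tsupport_gradient_subset {d : ℕ} (f : Euc d → ℝ) : tsupport (gradient f) ⊆ tsupport f := by
  refine closure_minimal ?_ isClosed_closure
  intro x hx
  by_contra h
  apply hx
  have : f =ᶠ[𝓝 x] fun _ => (0 : ℝ) := notMem_tsupport_iff_eventuallyEq.1 h
  rw [this.gradient_eq, gradient_fun_const]

theorem exists_cutoff {d : ℕ} {Ω L : Set (Euc d)} (hΩ : IsOpen Ω) (hL : IsCompact L) (hLΩ : L ⊆ Ω) :
    ∃ φ : Euc d → ℝ, IsTestFun Ω φ ∧ (∀ x, 0 ≤ φ x) ∧ (∀ x, φ x ≤ 1) ∧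
      ∃ U, IsOpen U ∧ L ⊆ U ∧ ∀ x ∈ U, φ x = 1 := by
  obtain ⟨L1, hL1, hLL1, hL1Ω⟩ := exists_compact_between hL hΩ hLΩ
  obtain ⟨L2, hL2, hL12, hL2Ω⟩ := exists_compact_between hL1 hΩ hL1Ω
  obtain ⟨φ, h1, h2, h3, h4⟩ := exists_contMDiff_zero_iff_one_iff_of_isClosed (n := (⊤ : ℕ∞))
    (modelWithCornersSelf ℝ (Euc d)) (s := (interior L2)ᶜ) (t := L1)
    isOpen_interior.isClosed_compl hL1.isClosed
    (Set.disjoint_compl_left_iff_subset.2 hL12)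
  have hsupp : tsupport φ ⊆ L2 := by
    refine closure_minimal ?_ hL2.isClosed
    intro x hx
    by_contra h
    exact hx ((h3 x).1 (fun h' => h (interior_subset h')))
  refine ⟨φ, ⟨h1.contDiff, ?_, hsupp.trans hL2Ω⟩, ?_, ?_, interior L1, isOpen_interior, hLL1, ?_⟩
  · exact hL2.of_isClosed_subset isClosed_closure hsupp
  · exact fun x => (h2 ⟨x, rfl⟩).1
  · exact fun x => (h2 ⟨x, rfl⟩).2
  · exact fun x hx => (h4 x).1 (interior_subset hx)

/-- regularized absolute value -/
def reg {d : ℕ} (ε : ℝ) (φ u : Euc d → ℝ) (x : Euc d) : ℝ := √(u x ^ 2 + (ε * φ x) ^ 2)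

section reg
variable {d : ℕ} {ε : ℝ} {φ u : Euc d → ℝ}

theorem reg_nonneg (x : Euc d) : 0 ≤ reg ε φ u x := Real.sqrt_nonneg _

theorem reg_pos (hε : 0 < ε) {x : Euc d} (h : φ x ≠ 0) : 0 < reg ε φ u x := by
  unfold reg; positivity

theorem abs_le_reg (x : Euc d) : |u x| ≤ reg ε φ u x := by
  unfold reg
  rw [← Real.sqrt_sq_eq_abs]
  exact Real.sqrt_le_sqrt (by nlinarith [sq_nonneg (ε * φ x)])

theorem eps_le_reg (x : Euc d) : ε * φ x ≤ reg ε φ u x := by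
  unfold reg
  exact Real.le_sqrt_of_sq_le (by nlinarith [sq_nonneg (u x)])

theorem reg_le (hε : 0 ≤ ε) (hφ : ∀ x, 0 ≤ φ x) (x : Euc d) : reg ε φ u x ≤ |u x| + ε * φ x := by
  unfold reg
  have := hφ x
  rw [Real.sqrt_le_left (by positivity)]
  have h1 := sq_abs (u x)
  have : 0 ≤ |u x| * (ε * φ x) := by positivity
  nlinarith

theorem eventually_zero (hu : ∀ x, φ x = 0 → x ∉ tsupport u) {x : Euc d} (hx : φ x = 0) :
    ∀ᶠ y in 𝓝 x, u y = 0 := notMem_tsupport_iff_eventuallyEq.1 (hu x hx)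

theorem reg_eq_of_zero (hε : 0 ≤ ε) (hφ : ∀ x, 0 ≤ φ x) {x : Euc d} (h : u x = 0) :
    reg ε φ u x = ε * φ x := by
  unfold reg
  rw [h]; simp only [ne_eq, OfNat.ofNat_ne_zero, not_false_eq_true, zero_pow, zero_add]
  exact Real.sqrt_sq (mul_nonneg hε (hφ x))

theorem reg_contDiff (hε : 0 < ε) (hφ : ∀ x, 0 ≤ φ x) (hφs : ContDiff ℝ (⊤ : ℕ∞) φ)
    (hus : ContDiff ℝ (⊤ : ℕ∞) u) (hu : ∀ x, φ x = 0 → x ∉ tsupport u) :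
    ContDiff ℝ (⊤ : ℕ∞) (reg ε φ u) := by
  rw [contDiff_iff_contDiffAt]
  intro x
  by_cases h : φ x = 0
  · have : reg ε φ u =ᶠ[𝓝 x] fun y => ε * φ y := by
      filter_upwards [eventually_zero hu h] with y hy
      exact reg_eq_of_zero hε.le hφ hy
    exact (contDiffAt_const.mul hφs.contDiffAt).congr_of_eventuallyEq this
  · unfold reg
    refine ContDiffAt.sqrt ?_ (by positivity)
    exact ((hus.pow 2).add ((contDiff_const.mul hφs).pow 2)).contDiffAt

theorem reg_tsupport (hu : ∀ x, φ x = 0 → x ∉ tsupport u) :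
    tsupport (reg ε φ u) ⊆ tsupport φ := by
  refine closure_mono ?_
  intro x hx h
  apply hx
  have := (eventually_zero hu h).self_of_nhds
  simp [reg, h, this]

theorem reg_test {Ω : Set (Euc d)} (hε : 0 < ε) (hφ : ∀ x, 0 ≤ φ x) (hφs : IsTestFun Ω φ)
    (hus : ContDiff ℝ (⊤ : ℕ∞) u) (hu : ∀ x, φ x = 0 → x ∉ tsupport u) :
    IsTestFun Ω (reg ε φ u) :=
  ⟨reg_contDiff hε hφ hφs.1 hus hu,
    hφs.2.1.of_isClosed_subset isClosed_closure (reg_tsupport hu),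
    (reg_tsupport hu).trans hφs.2.2⟩

theorem reg_gradient_le (hε : 0 < ε) (hφ : ∀ x, 0 ≤ φ x) (hφs : ContDiff ℝ (⊤ : ℕ∞) φ)
    (hus : ContDiff ℝ (⊤ : ℕ∞) u) (hu : ∀ x, φ x = 0 → x ∉ tsupport u) (x : Euc d) :
    ‖gradient (reg ε φ u) x‖ ≤ ‖gradient u x‖ + ε * ‖gradient φ x‖ := by
  have hφd : DifferentiableAt ℝ φ x := hφs.differentiable (by simp) x
  have hud : DifferentiableAt ℝ u x := hus.differentiable (by simp) x
  by_cases h : φ x = 0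
  · have : reg ε φ u =ᶠ[𝓝 x] fun y => ε * φ y := by
      filter_upwards [eventually_zero hu h] with y hy
      exact reg_eq_of_zero hε.le hφ hy
    have h2 : gradient (reg ε φ u) x = ε • gradient φ x := by
      rw [this.gradient_eq]
      refine gradient_eq_of_fderiv fun y => ?_
      rw [fderiv_const_mul hφd, inner_smul_left, inner_gradient_left]; simp
    rw [h2, norm_smul, Real.norm_of_nonneg hε.le]
    linarith [norm_nonneg (gradient u x)]
  · have hpos : 0 < reg ε φ u x := reg_pos hε h
    have hr : DifferentiableAt ℝ (reg ε φ u) x :=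
      (reg_contDiff hε hφ hφs hus hu).differentiable (by simp) x
    have hsq : (fun y => reg ε φ u y ^ 2) = fun y => u y ^ 2 + (ε * φ y) ^ 2 := by
      funext y; unfold reg; exact Real.sq_sqrt (by positivity)
    have e1 : HasFDerivAt (fun y => reg ε φ u y ^ 2)
        ((2 * reg ε φ u x ^ 1) • fderiv ℝ (reg ε φ u) x) x := by
      simpa using hr.hasFDerivAt.pow 2
    have e2 : HasFDerivAt (fun y => u y ^ 2 + (ε * φ y) ^ 2)
        ((2 * u x ^ 1) • fderiv ℝ u x + (2 * (ε * φ x) ^ 1) • (ε • fderiv ℝ φ x)) x := by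
      simpa using (hud.hasFDerivAt.pow 2).fun_add ((hφd.hasFDerivAt.const_mul ε).pow 2)
    rw [hsq] at e1
    have e3 := e1.unique e2
    have e4 : reg ε φ u x • gradient (reg ε φ u) x = u x • gradient u x + (ε * φ x) • (ε • gradient φ x) := by
      refine ext_inner_right ℝ fun y => ?_
      have := congrArg (fun L => L y) e3
      simp only [pow_one, smul_apply, add_apply, smul_eq_mul] at this
      simp only [inner_add_left, inner_smul_left, inner_gradient_left]
      simp only [conj_trivial]
      linarith
    have e5 : reg ε φ u x * ‖gradient (reg ε φ u) x‖ ≤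
        reg ε φ u x * (‖gradient u x‖ + ε * ‖gradient φ x‖) := by
      calc _ = ‖reg ε φ u x • gradient (reg ε φ u) x‖ := by
            rw [norm_smul, Real.norm_of_nonneg hpos.le]
        _ ≤ |u x| * ‖gradient u x‖ + (ε * φ x) * (ε * ‖gradient φ x‖) := by
            rw [e4]; refine (norm_add_le _ _).trans (le_of_eq ?_)
            rw [norm_smul, norm_smul, norm_smul, Real.norm_eq_abs, Real.norm_of_nonneg hε.le,
              Real.norm_of_nonneg (mul_nonneg hε.le (hφ x))]
        _ ≤ _ := by
            rw [mul_add]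
            gcongr
            · exact abs_le_reg x
            · exact eps_le_reg x
    exact le_of_mul_le_mul_left e5 hpos

end reg

theorem integrable_V_mul {d : ℕ} {V g : Euc d → ℝ} (hV : Measurable V) (hg : Continuous g)
    (hgc : HasCompactSupport g) {C : ℝ} (hC : ∀ x ∈ tsupport g, |V x| ≤ C) :
    Integrable (fun x => V x * g x) := by
  have h1 : Integrable g := hg.integrable_of_hasCompactSupport hgc
  refine Integrable.mono' (h1.norm.const_mul C) (hV.aestronglyMeasurable.mul hg.aestronglyMeasurable) ?_
  refine Eventually.of_forall fun x => ?_
  rw [norm_mul]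
  by_cases hx : x ∈ tsupport g
  · exact mul_le_mul_of_nonneg_right (hC x hx) (norm_nonneg _)
  · rw [image_eq_zero_of_notMem_tsupport hx]; simp

theorem test_integrable_grad {d : ℕ} {p : ℝ} (hp : 1 < p) {u : Euc d → ℝ}
    (hu : ContDiff ℝ (⊤ : ℕ∞) u) (hc : HasCompactSupport u) :
    Integrable (fun x => ‖gradient u x‖ ^ p) := by
  have hp0 : 0 < p := by linarith
  refine Continuous.integrable_of_hasCompactSupport ?_ ?_
  · exact (continuous_gradient hu).norm.rpow_const fun _ => Or.inr hp0.le
  · refine HasCompactSupport.of_support_subset_isCompact hc ?_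
    intro x hx
    apply tsupport_gradient_subset u
    apply subset_closure
    intro h; apply hx; simp [h, Real.zero_rpow hp0.ne']

theorem test_integrable_V {d : ℕ} {Ω : Set (Euc d)} {V : Euc d → ℝ} {p : ℝ} (hp : 1 < p)
    (hV : LocBddPotential Ω V) {u : Euc d → ℝ} (hu : IsTestFun Ω u) :
    Integrable (fun x => V x * |u x| ^ p) := by
  have hp0 : 0 < p := by linarith
  have hs : tsupport (fun x => |u x| ^ p) ⊆ tsupport u := by
    refine closure_mono fun x hx h => hx ?_
    simp [h, Real.zero_rpow hp0.ne']
  obtain ⟨C, hC⟩ := hV.2 _ hu.2.2 hu.2.1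
  refine integrable_V_mul hV.1 (hu.1.continuous.abs.rpow_const fun _ => Or.inr hp0.le) ?_
    (C := C) (fun x hx => hC x (hs hx))
  exact hu.2.1.of_isClosed_subset isClosed_closure hs

theorem energy_split {d : ℕ} {Ω : Set (Euc d)} {V : Euc d → ℝ} {p : ℝ} (hp : 1 < p)
    (hV : LocBddPotential Ω V) {u : Euc d → ℝ} (hu : IsTestFun Ω u) :
    energyQ Ω V p u = (∫ x in Ω, ‖gradient u x‖ ^ p) + ∫ x in Ω, V x * |u x| ^ p :=
  integral_add (test_integrable_grad hp hu.1 hu.2.1).integrableOn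
    (test_integrable_V hp hV hu).integrableOn

/-- the energy of the regularization is almost at most that of `u` -/
theorem energy_reg_le {d : ℕ} (Ω S : Set (Euc d)) {V : Euc d → ℝ} {p : ℝ} (hp : 1 < p)
    (hV : LocBddPotential Ω V) {φ u : Euc d → ℝ} (hφt : IsTestFun Ω φ) (hφ : ∀ x, 0 ≤ φ x)
    (hut : IsTestFun Ω u) (hu : ∀ x, φ x = 0 → x ∉ tsupport u) {η : ℝ} (hη : 0 < η) :
    ∀ᶠ ε in 𝓝[>] (0 : ℝ), energyQ S V p (reg ε φ u) ≤ energyQ S V p u + η := by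
  have hp0 : 0 < p := by linarith
  set h : ℝ → Euc d → ℝ := fun ε x =>
    (‖gradient u x‖ + ε * ‖gradient φ x‖) ^ p + V x * (reg ε φ u x) ^ p
  have hcu := continuous_gradient hut.1
  have hcφ := continuous_gradient hφt.1
  have hint1 : Integrable (fun x => (‖gradient u x‖ + 1 * ‖gradient φ x‖) ^ p) := by
    refine Continuous.integrable_of_hasCompactSupport ?_ ?_
    · exact Continuous.rpow_const (by fun_prop) fun _ => Or.inr hp0.le
    · refine HasCompactSupport.of_support_subset_isCompact (hut.2.1.union hφt.2.1) ?_
      intro x hx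
      by_contra hn
      simp only [Set.mem_union, not_or] at hn
      have h1 := image_eq_zero_of_notMem_tsupport (fun h => hn.1 (tsupport_gradient_subset u h))
      have h2 := image_eq_zero_of_notMem_tsupport (fun h => hn.2 (tsupport_gradient_subset φ h))
      apply hx; simp [h1, h2, Real.zero_rpow hp0.ne']
  have hint2 : ∀ ε, 0 < ε → Integrable (fun x => V x * (reg ε φ u x) ^ p) := by
    intro ε hε
    have := test_integrable_V hp hV (reg_test (u := u) hε hφ hφt hut.1 hu)
    simpa [abs_of_nonneg (reg_nonneg _)] using this
  have hlim : Tendsto (fun ε => ∫ x in S, h ε x) (𝓝[>] 0) (𝓝 (∫ x in S, h 0 x)) := by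
    refine tendsto_integral_filter_of_dominated_convergence
      (fun x => (‖gradient u x‖ + 1 * ‖gradient φ x‖) ^ p + ‖V x * (reg 1 φ u x) ^ p‖) ?_ ?_ ?_ ?_
    · filter_upwards [self_mem_nhdsWithin] with ε hε
      refine AEStronglyMeasurable.add ?_ (hint2 ε hε).aestronglyMeasurable.restrict
      exact (Continuous.rpow_const (by fun_prop) fun _ => Or.inr hp0.le).aestronglyMeasurable
    · filter_upwards [Ioc_mem_nhdsGT (zero_lt_one' ℝ)] with ε hε
      refine Eventually.of_forall fun x => ?_
      refine (norm_add_le _ _).trans (add_le_add ?_ ?_)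
      · rw [Real.norm_of_nonneg (by have := hε.1; positivity)]
        have := hε.2
        have := hε.1
        gcongr
      · rw [norm_mul, norm_mul]
        refine mul_le_mul_of_nonneg_left ?_ (norm_nonneg _)
        rw [Real.norm_of_nonneg (Real.rpow_nonneg (reg_nonneg _) _),
          Real.norm_of_nonneg (Real.rpow_nonneg (reg_nonneg _) _)]
        refine Real.rpow_le_rpow (reg_nonneg _) ?_ hp0.le
        unfold reg
        have := hφ x
        have := hε.2
        have := hε.1
        gcongr
    · exact (hint1.add (hint2 1 one_pos).norm).integrableOn
    · refine Eventually.of_forall fun x => ?_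
      have hc : Continuous (fun ε => h ε x) := by
        simp only [h, reg]
        refine Continuous.add (Continuous.rpow_const (by fun_prop) fun _ => Or.inr hp0.le)
          (Continuous.mul continuous_const (Continuous.rpow_const (by fun_prop) fun _ => Or.inr hp0.le))
      exact (hc.tendsto 0).mono_left nhdsWithin_le_nhds
  have h0 : ∫ x in S, h 0 x = energyQ S V p u := by
    unfold energyQ
    congr 1; funext x
    simp [h, reg, Real.sqrt_sq_eq_abs]
  rw [h0] at hlim
  filter_upwards [hlim.eventually (gt_mem_nhds (show energyQ S V p u < energyQ S V p u + η by linarith)),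
    self_mem_nhdsWithin, Ioc_mem_nhdsGT (zero_lt_one' ℝ)] with ε hε hε0 hε1
  refine le_trans ?_ hε.le
  unfold energyQ
  have hrt := reg_test (u := u) hε0 hφ hφt hut.1 hu
  refine integral_mono_ae ?_ ?_ ?_
  · exact ((test_integrable_grad hp hrt.1 hrt.2.1).add (test_integrable_V hp hV hrt)).integrableOn
  · refine Integrable.integrableOn (Integrable.add ?_ (hint2 ε hε0))
    refine Integrable.mono' hint1 ?_ ?_
    · exact (Continuous.rpow_const (by fun_prop) fun _ => Or.inr hp0.le).aestronglyMeasurable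
    · refine Eventually.of_forall fun x => ?_
      rw [Real.norm_of_nonneg (by have := hε1.1; positivity)]
      have := hε1.2
      have := hε1.1
      gcongr
  · refine Eventually.of_forall fun x => ?_
    simp only [h]
    rw [abs_of_nonneg (reg_nonneg x)]
    gcongr
    exact reg_gradient_le hε0 hφ hφt.1 hut.1 hu x


/-- the `p`-sum -/
def comb {d : ℕ} (p : ℝ) (a b : Euc d → ℝ) (x : Euc d) : ℝ := (a x ^ p + b x ^ p) ^ (1 / p)

theorem comb_test {d : ℕ} {Ω : Set (Euc d)} {p ε s : ℝ} (hp : 1 < p) {φ u w : Euc d → ℝ}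
    (hε : 0 < ε) (hs : 0 < s) (hφ : ∀ x, 0 ≤ φ x) (hφt : IsTestFun Ω φ)
    (hut : IsTestFun Ω u) (hu : ∀ x, φ x = 0 → x ∉ tsupport u)
    (hwt : IsTestFun Ω w) (hw : ∀ x, φ x = 0 → x ∉ tsupport w) :
    IsTestFun Ω (comb p (reg ε φ u) (fun x => s * reg ε φ w x)) := by
  have hp0 : 0 < p := by linarith
  have hsupp : tsupport (comb p (reg ε φ u) (fun x => s * reg ε φ w x)) ⊆ tsupport φ := by
    refine closure_mono fun x hx h => hx ?_
    have h1 := (eventually_zero hu h).self_of_nhds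
    have h2 := (eventually_zero hw h).self_of_nhds
    simp [comb, reg, h1, h2, h, hp0.ne']
  refine ⟨?_, hφt.2.1.of_isClosed_subset isClosed_closure hsupp, hsupp.trans hφt.2.2⟩
  rw [contDiff_iff_contDiffAt]
  intro x
  by_cases h : φ x = 0
  · have : comb p (reg ε φ u) (fun x => s * reg ε φ w x) =ᶠ[𝓝 x]
        fun y => (1 + s ^ p) ^ (1 / p) * (ε * φ y) := by
      filter_upwards [eventually_zero hu h, eventually_zero hw h] with y hy1 hy2
      have hφy := hφ y
      simp only [comb]
      rw [reg_eq_of_zero hε.le hφ hy1, reg_eq_of_zero hε.le hφ hy2,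
        Real.mul_rpow hs.le (by positivity)]
      have : (ε * φ y) ^ p + s ^ p * (ε * φ y) ^ p = (1 + s ^ p) * (ε * φ y) ^ p := by ring
      rw [this, Real.mul_rpow (by positivity) (by positivity), ← Real.rpow_mul (by positivity),
        mul_one_div_cancel hp0.ne', Real.rpow_one]
    refine ContDiffAt.congr_of_eventuallyEq ?_ this
    exact contDiffAt_const.mul (contDiffAt_const.mul hφt.1.contDiffAt)
  · have h1 := reg_pos (u := u) hε h
    have h2 := reg_pos (u := w) hε h
    unfold comb
    refine ContDiffAt.rpow_const_of_ne ?_ (by positivity)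
    refine ContDiffAt.add (ContDiffAt.rpow_const_of_ne ?_ h1.ne')
      (ContDiffAt.rpow_const_of_ne ?_ (by positivity))
    · exact (reg_contDiff hε hφ hφt.1 hut.1 hu).contDiffAt
    · exact contDiffAt_const.mul (reg_contDiff hε hφ hφt.1 hwt.1 hw).contDiffAt

theorem energy_smul {d : ℕ} {Ω : Set (Euc d)} {V : Euc d → ℝ} {p s : ℝ} (hs : 0 < s)
    {b : Euc d → ℝ} (hb : IsTestFun Ω b) :
    IsTestFun Ω (fun x => s * b x) ∧ (∀ x, gradient (fun x => s * b x) x = s • gradient b x) ∧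
    energyQ Ω V p (fun x => s * b x) = s ^ p * energyQ Ω V p b := by
  have hg : ∀ x, gradient (fun x => s * b x) x = s • gradient b x := by
    intro x
    refine gradient_eq_of_fderiv fun y => ?_
    rw [fderiv_const_mul (hb.1.differentiable (by simp) x), inner_smul_left, inner_gradient_left]
    simp
  have hsub : tsupport (fun x => s * b x) ⊆ tsupport b :=
    closure_mono fun x hx h => hx (by simp [h])
  refine ⟨⟨contDiff_const.mul hb.1, hb.2.1.of_isClosed_subset isClosed_closure hsub,
    hsub.trans hb.2.2⟩, hg, ?_⟩
  unfold energyQ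
  rw [← integral_const_mul]
  congr 1; funext x
  rw [hg, norm_smul, Real.norm_of_nonneg hs.le, Real.mul_rpow hs.le (norm_nonneg _), abs_mul,
    abs_of_pos hs, Real.mul_rpow hs.le (abs_nonneg _)]
  ring

theorem comb_gradient {d : ℕ} {p : ℝ} (hp : 1 < p) {a b : Euc d → ℝ} {x : Euc d}
    (ha : DifferentiableAt ℝ a x) (hb : DifferentiableAt ℝ b x)
    (hm : DifferentiableAt ℝ (comb p a b) x) (ha0 : ∀ y, 0 ≤ a y) (hb0 : ∀ y, 0 ≤ b y)
    (hax : 0 < a x) (hbx : 0 < b x) :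
    (comb p a b x) ^ (p - 1) • gradient (comb p a b) x =
      (a x) ^ (p - 1) • gradient a x + (b x) ^ (p - 1) • gradient b x := by
  have hp0 : 0 < p := by linarith
  have hmx : 0 < comb p a b x := by unfold comb; positivity
  have he : (fun y => comb p a b y ^ p) = fun y => a y ^ p + b y ^ p := by
    funext y
    have h1 := ha0 y
    have h2 := hb0 y
    unfold comb
    rw [← Real.rpow_mul (by positivity), one_div_mul_cancel hp0.ne', Real.rpow_one]
  have e1 := hm.hasFDerivAt.rpow_const (p := p) (Or.inl hmx.ne')
  have e2 := (ha.hasFDerivAt.rpow_const (p := p) (Or.inl hax.ne')).fun_add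
    (hb.hasFDerivAt.rpow_const (p := p) (Or.inl hbx.ne'))
  rw [he] at e1
  have e3 := e1.unique e2
  refine ext_inner_right ℝ fun y => ?_
  have := congrArg (fun L => L y) e3
  simp only [smul_apply, add_apply, smul_eq_mul] at this
  simp only [inner_add_left, inner_smul_left, inner_gradient_left, conj_trivial]
  have h2 : p * (comb p a b x ^ (p - 1) * fderiv ℝ (comb p a b) x y) =
    p * (a x ^ (p - 1) * fderiv ℝ a x y + b x ^ (p - 1) * fderiv ℝ b x y) := by linarith
  exact mul_left_cancel₀ hp0.ne' h2

theorem deficit_integral {d : ℕ} {Ω : Set (Euc d)}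
    {V : Euc d → ℝ} {p ε s : ℝ} (hp : 1 < p)
    (hV : LocBddPotential Ω V) (hQ : ∀ u : Euc d → ℝ, IsTestFun Ω u → 0 ≤ energyQ Ω V p u)
    {κ C : ℝ} (hκ : 0 ≤ κ) (hC : 0 ≤ C)
    (hgap : ∀ X Y : Euc d, ‖X - Y‖ ^ p ≤ C * gapHalf p X Y + κ * ‖X‖ ^ p)
    {φ u w : Euc d → ℝ}
    (hε : 0 < ε) (hs : 0 < s) (hφ : ∀ x, 0 ≤ φ x) (hφt : IsTestFun Ω φ)
    (hut : IsTestFun Ω u) (hu : ∀ x, φ x = 0 → x ∉ tsupport u)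
    (hwt : IsTestFun Ω w) (hw : ∀ x, φ x = 0 → x ∉ tsupport w)
    {K : Set (Euc d)} (hK : MeasurableSet K) (hKΩ : K ⊆ Ω) (hKφ : ∀ x ∈ K, φ x ≠ 0) :
    ∫⁻ x in K, ENNReal.ofReal ((reg ε φ u x ^ p * (s * reg ε φ w x) ^ p /
        (reg ε φ u x ^ p + (s * reg ε φ w x) ^ p)) *
        ‖(reg ε φ u x)⁻¹ • gradient (reg ε φ u) x - (reg ε φ w x)⁻¹ • gradient (reg ε φ w) x‖ ^ p)
      ≤ ENNReal.ofReal (C * (energyQ Ω V p (reg ε φ u) + s ^ p * energyQ Ω V p (reg ε φ w))) +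
        ENNReal.ofReal κ * ∫⁻ x in K, ENNReal.ofReal (‖gradient (reg ε φ u) x‖ ^ p) := by
  have hp0 : 0 < p := by linarith
  have hat := reg_test (u := u) hε hφ hφt hut.1 hu
  have hbt0 := reg_test (u := w) hε hφ hφt hwt.1 hw
  obtain ⟨hbt, hbg, hbQ⟩ := energy_smul (V := V) (p := p) hs hbt0
  have hmt := comb_test hp hε hs hφ hφt hut hu hwt hw
  set a := reg ε φ u with ha
  set b0 := reg ε φ w with hb0
  set b := fun x => s * b0 x with hb
  set m := comb p a b with hm
  have hann : ∀ x, 0 ≤ a x := fun x => reg_nonneg x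
  have hbnn : ∀ x, 0 ≤ b x := fun x => mul_nonneg hs.le (reg_nonneg x)
  have hmnn : ∀ x, 0 ≤ m x := fun x => by
    have h1 := hann x
    have h2 := hbnn x
    simp only [hm, comb]; positivity
  have hmp : ∀ x, m x ^ p = a x ^ p + b x ^ p := fun x => by
    have h1 := hann x
    have h2 := hbnn x
    simp only [hm, comb]
    rw [← Real.rpow_mul (by positivity), one_div_mul_cancel hp0.ne', Real.rpow_one]
  set D : Euc d → ℝ := fun x => ‖gradient a x‖ ^ p + ‖gradient b x‖ ^ p - ‖gradient m x‖ ^ p with hD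
  have hpt : ∀ x, φ x ≠ 0 → 0 ≤ D x ∧
      (a x ^ p * b x ^ p / (a x ^ p + b x ^ p)) * ‖(a x)⁻¹ • gradient a x - (b x)⁻¹ • gradient b x‖ ^ p ≤
      C * D x + κ * ‖gradient a x‖ ^ p := by
    intro x hx
    have hax : 0 < a x := reg_pos hε hx
    have hbx : 0 < b x := mul_pos hs (reg_pos hε hx)
    have hmx : 0 < m x := by simp only [hm, comb]; positivity
    exact deficit_ineq hp hκ hC hgap hax hbx hmx (hmp x) _ _ _
      (comb_gradient hp (hat.1.differentiable (by simp) x) (hbt.1.differentiable (by simp) x)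
        (hmt.1.differentiable (by simp) x) hann hbnn hax hbx)
  have hDnn : ∀ x, 0 ≤ D x := by
    intro x
    by_cases hx : φ x = 0
    · have hmx : m x = 0 := by
        have h1 := (eventually_zero hu hx).self_of_nhds
        have h2 := (eventually_zero hw hx).self_of_nhds
        simp [hm, comb, ha, hb, hb0, reg, h1, h2, hx, hp0.ne']
      have hmin : IsLocalMin m x := Eventually.of_forall fun y => by rw [hmx]; exact hmnn y
      have hg0 : gradient m x = 0 :=
        gradient_eq_of_fderiv fun y => by rw [hmin.fderiv_eq_zero]; simp
      simp only [hD, hg0, norm_zero, Real.zero_rpow hp0.ne', sub_zero]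
      positivity
    · exact (hpt x hx).1
  have hIa := test_integrable_grad hp hat.1 hat.2.1
  have hIb := test_integrable_grad hp hbt.1 hbt.2.1
  have hIm := test_integrable_grad hp hmt.1 hmt.2.1
  have hID : Integrable D := (hIa.add hIb).sub hIm
  have hDle : ∫ x in Ω, D x ≤ energyQ Ω V p a + energyQ Ω V p b := by
    have h1 : energyQ Ω V p a + energyQ Ω V p b - energyQ Ω V p m = ∫ x in Ω, D x := by
      have hQa : IntegrableOn (fun x => ‖gradient a x‖ ^ p + V x * |a x| ^ p) Ω :=
        (hIa.add (test_integrable_V hp hV hat)).integrableOn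
      have hQb : IntegrableOn (fun x => ‖gradient b x‖ ^ p + V x * |b x| ^ p) Ω :=
        (hIb.add (test_integrable_V hp hV hbt)).integrableOn
      have hQm : IntegrableOn (fun x => ‖gradient m x‖ ^ p + V x * |m x| ^ p) Ω :=
        (hIm.add (test_integrable_V hp hV hmt)).integrableOn
      unfold energyQ
      have hQab : IntegrableOn (fun x => (‖gradient a x‖ ^ p + V x * |a x| ^ p) +
        (‖gradient b x‖ ^ p + V x * |b x| ^ p)) Ω := hQa.add hQb
      rw [← integral_add hQa hQb, ← integral_sub hQab hQm]
      congr 1; funext x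
      rw [abs_of_nonneg (hann x), abs_of_nonneg (hbnn x), abs_of_nonneg (hmnn x), hmp]
      simp only [hD]; ring
    have := hQ m hmt
    linarith
  rw [hbQ] at hDle
  calc _ ≤ ∫⁻ x in K, (ENNReal.ofReal (C * D x) + ENNReal.ofReal κ * ENNReal.ofReal (‖gradient a x‖ ^ p)) := by
        refine setLIntegral_mono' hK fun x hx => ?_
        rw [← ENNReal.ofReal_mul hκ, ← ENNReal.ofReal_add (mul_nonneg hC (hDnn x)) (by positivity)]
        refine ENNReal.ofReal_le_ofReal (le_trans (le_of_eq ?_) (hpt x (hKφ x hx)).2)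
        rw [hbg]
        simp only [hb, smul_smul]
        congr 5
        field_simp
    _ = (∫⁻ x in K, ENNReal.ofReal (C * D x)) + ENNReal.ofReal κ * ∫⁻ x in K, ENNReal.ofReal (‖gradient a x‖ ^ p) := by
        have hmeas : Measurable (fun x => ENNReal.ofReal (‖gradient a x‖ ^ p)) :=
          ((continuous_gradient hat.1).norm.rpow_const fun _ => Or.inr hp0.le).measurable.ennreal_ofReal
        rw [lintegral_add_right _ (hmeas.const_mul _), lintegral_const_mul _ hmeas]
    _ ≤ _ := by
        gcongr
        calc _ ≤ ∫⁻ x in Ω, ENNReal.ofReal (C * D x) := lintegral_mono_set hKΩ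
          _ = ENNReal.ofReal (∫ x in Ω, C * D x) := by
              rw [ofReal_integral_eq_lintegral_ofReal (hID.const_mul C).integrableOn]
              exact Eventually.of_forall fun x => mul_nonneg hC (hDnn x)
          _ ≤ _ := by
              rw [integral_const_mul]
              exact ENNReal.ofReal_le_ofReal (mul_le_mul_of_nonneg_left hDle hC)


theorem jensen_lintegral {α : Type*} [MeasurableSpace α] (μ : Measure α) {p : ℝ} (hp : 1 < p)
    {f : α → ENNReal} (hf : AEMeasurable f μ) :
    (∫⁻ x, f x ∂μ) ^ p ≤ (μ Set.univ) ^ (p - 1) * ∫⁻ x, f x ^ p ∂μ := by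
  have hp0 : 0 < p := by linarith
  have hpq := Real.HolderConjugate.conjExponent hp
  have h := ENNReal.lintegral_mul_le_Lp_mul_Lq μ hpq hf (aemeasurable_const (b := (1 : ENNReal)))
  simp only [Pi.mul_apply, mul_one, ENNReal.one_rpow, lintegral_const, one_mul] at h
  calc _ ≤ ((∫⁻ x, f x ^ p ∂μ) ^ (1 / p) * (μ Set.univ) ^ (1 / p.conjExponent)) ^ p :=
        ENNReal.rpow_le_rpow h hp0.le
    _ = _ := by
        rw [ENNReal.mul_rpow_of_nonneg _ _ hp0.le, ← ENNReal.rpow_mul, ← ENNReal.rpow_mul,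
          one_div_mul_cancel hp0.ne', ENNReal.rpow_one, mul_comm]
        congr 2
        rw [Real.conjExponent]
        have : p - 1 ≠ 0 := by linarith
        field_simp

theorem lintegral_translate {d : ℕ} {K K' : Set (Euc d)} (hK : MeasurableSet K)
    (hK' : MeasurableSet K') {e : Euc d} {τ : ℝ}
    (hKK : ∀ x ∈ K, ∀ t ∈ Set.Icc 0 τ, x + t • e ∈ K') {h : Euc d → ENNReal} (hh : Measurable h) :
    ∫⁻ x in K, ∫⁻ t in Set.Icc 0 τ, h (x + t • e) ≤ ENNReal.ofReal τ * ∫⁻ y in K', h y := by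
  rw [lintegral_lintegral_swap]
  · calc _ ≤ ∫⁻ t in Set.Icc 0 τ, ∫⁻ y in K', h y := by
          refine setLIntegral_mono' measurableSet_Icc fun t ht => ?_
          rw [← lintegral_indicator hK, ← lintegral_indicator hK']
          rw [← lintegral_add_right_eq_self (fun y => K'.indicator h y) (t • e)]
          refine lintegral_mono fun x => ?_
          by_cases hx : x ∈ K
          · rw [Set.indicator_of_mem hx, Set.indicator_of_mem (hKK x hx t ht)]
          · rw [Set.indicator_of_notMem hx]; exact zero_le
      _ = _ := by simp [mul_comm]
  · refine Measurable.aemeasurable ?_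
    exact hh.comp (by fun_prop)

theorem translate_est {d : ℕ} {p : ℝ} (hp : 1 < p) {T : Euc d → ℝ} (hT : ContDiff ℝ 1 T) {S : ℝ}
    (hS : ∀ x, |T x| ≤ S) {e : Euc d} (he : ‖e‖ ≤ 1) {τ : ℝ} (hτ : 0 < τ)
    {K K' : Set (Euc d)} (hK : MeasurableSet K) (hK' : MeasurableSet K')
    (hKK : ∀ x ∈ K, ∀ t ∈ Set.Icc 0 τ, x + t • e ∈ K')
    {A Er : Euc d → ENNReal} (hA : Measurable A) (hE : Measurable Er)
    (hgrad : ∀ y ∈ K', ENNReal.ofReal ‖fderiv ℝ T y‖ ≤ A y + Er y) :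
    ∫⁻ x in K, ENNReal.ofReal |T (x + τ • e) - T x| ^ p ≤
      2 ^ (p - 1) * ENNReal.ofReal τ ^ p * (∫⁻ y in K', A y ^ p) +
      2 ^ (p - 1) * ENNReal.ofReal (2 * S) ^ (p - 1) * ENNReal.ofReal τ * ∫⁻ y in K', Er y := by
  have hp0 : 0 < p := by linarith
  have hSn : 0 ≤ S := (abs_nonneg _).trans (hS 0)
  have hpt : ∀ x ∈ K, ENNReal.ofReal |T (x + τ • e) - T x| ^ p ≤
      2 ^ (p - 1) * ENNReal.ofReal τ ^ (p - 1) * (∫⁻ t in Set.Icc 0 τ, A (x + t • e) ^ p) +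
      2 ^ (p - 1) * ENNReal.ofReal (2 * S) ^ (p - 1) * ∫⁻ t in Set.Icc 0 τ, Er (x + t • e) := by
    intro x hx
    have hline : Measurable (fun t : ℝ => x + t • e) := by fun_prop
    set α := ∫⁻ t in Set.Icc 0 τ, A (x + t • e) with hα
    set β := ∫⁻ t in Set.Icc 0 τ, Er (x + t • e) with hβ
    have h1 : ENNReal.ofReal |T (x + τ • e) - T x| ≤ α + β := by
      have hder : ∀ t ∈ Set.uIcc 0 τ, HasDerivAt (fun t : ℝ => T (x + t • e))
          (fderiv ℝ T (x + t • e) e) t := by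
        intro t _
        have h2 : HasDerivAt (fun t : ℝ => x + t • e) e t := by
          simpa using ((hasDerivAt_id t).smul_const e).const_add x
        exact ((hT.differentiable (by simp)) _).hasFDerivAt.comp_hasDerivAt t h2
      have hcont : Continuous fun t : ℝ => fderiv ℝ T (x + t • e) e := by
        have := hT.continuous_fderiv (by simp)
        fun_prop
      have h3 := intervalIntegral.integral_eq_sub_of_hasDerivAt hder (hcont.intervalIntegrable 0 τ)
      simp only [zero_smul, add_zero] at h3
      rw [← h3, intervalIntegral.integral_of_le hτ.le, ← integral_Icc_eq_integral_Ioc,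
        ← Real.enorm_eq_ofReal_abs]
      refine (enorm_integral_le_lintegral_enorm _).trans ?_
      have hA' : Measurable (fun t : ℝ => A (x + t • e)) := hA.comp hline
      rw [hα, hβ, ← lintegral_add_left hA']
      refine setLIntegral_mono' measurableSet_Icc fun t ht => ?_
      refine le_trans ?_ (hgrad _ (hKK x hx t ht))
      rw [Real.enorm_eq_ofReal_abs]
      refine ENNReal.ofReal_le_ofReal ?_
      have := (fderiv ℝ T (x + t • e)).le_opNorm e
      rw [Real.norm_eq_abs] at this
      exact this.trans (mul_le_of_le_one_right (norm_nonneg _) he)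
    have h2 : ENNReal.ofReal |T (x + τ • e) - T x| ≤ ENNReal.ofReal (2 * S) := by
      refine ENNReal.ofReal_le_ofReal ?_
      have := abs_sub (T (x + τ • e)) (T x)
      linarith [hS (x + τ • e), hS x]
    have h3 : ENNReal.ofReal |T (x + τ • e) - T x| ≤ α + min β (ENNReal.ofReal (2 * S)) := by
      rcases le_total β (ENNReal.ofReal (2 * S)) with h | h
      · rwa [min_eq_left h]
      · rw [min_eq_right h]; exact h2.trans le_add_self
    calc _ ≤ (α + min β (ENNReal.ofReal (2 * S))) ^ p := ENNReal.rpow_le_rpow h3 hp0.le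
      _ ≤ 2 ^ (p - 1) * (α ^ p + (min β (ENNReal.ofReal (2 * S))) ^ p) :=
          ENNReal.rpow_add_le_mul_rpow_add_rpow _ _ hp.le
      _ ≤ 2 ^ (p - 1) * (ENNReal.ofReal τ ^ (p - 1) * (∫⁻ t in Set.Icc 0 τ, A (x + t • e) ^ p) +
            ENNReal.ofReal (2 * S) ^ (p - 1) * β) := by
          gcongr
          · have := jensen_lintegral (volume.restrict (Set.Icc 0 τ)) hp (hA.comp hline).aemeasurable
            simpa using this
          · have hmin : min β (ENNReal.ofReal (2 * S)) ≠ ⊤ :=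
              ne_top_of_le_ne_top ENNReal.ofReal_ne_top (min_le_right _ _)
            have : p = (p - 1) + 1 := by ring
            calc _ = (min β (ENNReal.ofReal (2 * S))) ^ (p - 1) * min β (ENNReal.ofReal (2 * S)) := by
                  conv_lhs => rw [this]
                  rw [ENNReal.rpow_add_of_nonneg _ _ (by linarith) (by norm_num), ENNReal.rpow_one]
              _ ≤ _ := by
                  refine mul_le_mul' (ENNReal.rpow_le_rpow (min_le_right _ _) (by linarith)) (min_le_left _ _)
      _ = _ := by ring
  have hm1 : Measurable fun x => ∫⁻ t in Set.Icc 0 τ, A (x + t • e) ^ p := by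
    refine Measurable.lintegral_prod_right' (f := fun q : Euc d × ℝ => A (q.1 + q.2 • e) ^ p) ?_
    exact (hA.comp (by fun_prop)).pow_const p
  have hm2 : Measurable fun x => ∫⁻ t in Set.Icc 0 τ, Er (x + t • e) := by
    refine Measurable.lintegral_prod_right' (f := fun q : Euc d × ℝ => Er (q.1 + q.2 • e)) ?_
    exact hE.comp (by fun_prop)
  refine (setLIntegral_mono' hK hpt).trans ?_
  rw [lintegral_add_left (hm1.const_mul _), lintegral_const_mul _ hm1, lintegral_const_mul _ hm2]
  have t1 := lintegral_translate hK hK' hKK (hA.pow_const p)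
  have t2 := lintegral_translate hK hK' hKK hE
  have e1 : ENNReal.ofReal τ ^ p = ENNReal.ofReal τ ^ (p - 1) * ENNReal.ofReal τ := by
    conv_lhs => rw [show p = (p - 1) + 1 by ring]
    rw [ENNReal.rpow_add_of_nonneg _ _ (by linarith) (by norm_num), ENNReal.rpow_one]
  rw [e1]
  calc _ ≤ 2 ^ (p - 1) * ENNReal.ofReal τ ^ (p - 1) * (ENNReal.ofReal τ * ∫⁻ y in K', A y ^ p) +
      2 ^ (p - 1) * ENNReal.ofReal (2 * S) ^ (p - 1) * (ENNReal.ofReal τ * ∫⁻ y in K', Er y) := by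
        gcongr
    _ = _ := by ring

theorem exists_chi {δ : ℝ} (hδ : 0 < δ) : ∃ χ : ℝ → ℝ, ContDiff ℝ 1 χ ∧ (∀ t, 0 ≤ χ t) ∧
    (∀ t, χ t ≤ 1) ∧ (∀ t ≤ δ, χ t = 0) ∧ (∀ t, 2 * δ ≤ t → χ t = 1) ∧
    ∃ c, 0 ≤ c ∧ (∀ t, |deriv χ t| ≤ c) ∧ ∀ t, 2 * δ < t → deriv χ t = 0 := by
  set χ : ℝ → ℝ := fun t => Real.smoothTransition (t / δ - 1) with hχ
  have hs : ContDiff ℝ 1 χ := by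
    have h1 : ContDiff ℝ ((1 : ℕ∞) : WithTop ℕ∞) Real.smoothTransition := Real.smoothTransition.contDiff
    have h2 : ContDiff ℝ 1 (fun t : ℝ => t / δ - 1) := by fun_prop
    exact h1.comp h2
  have h0 : ∀ t ≤ δ, χ t = 0 := fun t ht => Real.smoothTransition.zero_of_nonpos (by
    have : t / δ ≤ 1 := (div_le_one hδ).2 ht
    linarith)
  have h1 : ∀ t, 2 * δ ≤ t → χ t = 1 := fun t ht => Real.smoothTransition.one_of_one_le (by
    have : 2 ≤ t / δ := (le_div_iff₀ hδ).2 ht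
    linarith)
  have hd1 : ∀ t, 2 * δ < t → deriv χ t = 0 := fun t ht => by
    have : χ =ᶠ[𝓝 t] fun _ => (1 : ℝ) := by
      filter_upwards [lt_mem_nhds ht] with y hy using h1 y hy.le
    rw [this.deriv_eq]; simp
  have hd0 : ∀ t, t < δ → deriv χ t = 0 := fun t ht => by
    have : χ =ᶠ[𝓝 t] fun _ => (0 : ℝ) := by
      filter_upwards [gt_mem_nhds ht] with y hy using h0 y hy.le
    rw [this.deriv_eq]; simp
  obtain ⟨c, hc⟩ := (isCompact_Icc (a := δ) (b := 2 * δ)).exists_bound_of_continuousOn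
    (hs.continuous_deriv le_rfl).continuousOn
  refine ⟨χ, hs, fun t => Real.smoothTransition.nonneg _, fun t => Real.smoothTransition.le_one _,
    h0, h1, max c 0, le_max_right _ _, fun t => ?_, hd1⟩
  rcases lt_or_ge t δ with h | h
  · rw [hd0 t h]; simp
  rcases lt_or_ge (2 * δ) t with h' | h'
  · rw [hd1 t h']; simp
  · exact (hc t ⟨h, h'⟩).trans (le_max_left _ _)


/-- weighted logarithmic deficit density -/
def dfn {d : ℕ} (p s : ℝ) (a b : Euc d → ℝ) (x : Euc d) : ℝ :=
  (a x ^ p * (s * b x) ^ p / (a x ^ p + (s * b x) ^ p)) *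
    ‖(a x)⁻¹ • gradient a x - (b x)⁻¹ • gradient b x‖ ^ p

def trunc {d : ℕ} (χ : ℝ → ℝ) (s : ℝ) (a b : Euc d → ℝ) (x : Euc d) : ℝ :=
  χ (b x) * (s * a x / (s * b x + a x))

theorem ratio_bounds {s a b : ℝ} (hs : 0 < s) (ha : 0 ≤ a) (hb : 0 ≤ b) :
    0 ≤ s * a / (s * b + a) ∧ s * a / (s * b + a) ≤ s := by
  refine ⟨by positivity, div_le_of_le_mul₀ (by positivity) hs.le ?_⟩
  have : 0 ≤ s * (s * b) := by positivity
  nlinarith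

theorem trunc_abs_le {d : ℕ} {χ : ℝ → ℝ} (h0 : ∀ t, 0 ≤ χ t) (h1 : ∀ t, χ t ≤ 1) {s : ℝ} (hs : 0 < s)
    {a b : Euc d → ℝ} (ha : ∀ x, 0 ≤ a x) (hb : ∀ x, 0 ≤ b x) (x : Euc d) :
    |trunc χ s a b x| ≤ s := by
  obtain ⟨h2, h3⟩ := ratio_bounds hs (ha x) (hb x)
  unfold trunc
  rw [abs_of_nonneg (mul_nonneg (h0 _) h2)]
  calc _ ≤ 1 * s := mul_le_mul (h1 _) h3 h2 zero_le_one
    _ = s := one_mul _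

theorem trunc_contDiff {d : ℕ} {χ : ℝ → ℝ} {δ : ℝ} (hδ : 0 < δ) (hχ : ContDiff ℝ 1 χ)
    (hz : ∀ t ≤ δ, χ t = 0) {s : ℝ} (hs : 0 < s)
    {a b : Euc d → ℝ} (has : ContDiff ℝ (⊤ : ℕ∞) a) (hbs : ContDiff ℝ (⊤ : ℕ∞) b)
    (ha : ∀ x, 0 ≤ a x) :
    ContDiff ℝ 1 (trunc χ s a b) := by
  have ha1 : ContDiff ℝ 1 a := has.of_le (by exact_mod_cast le_top)
  have hb1 : ContDiff ℝ 1 b := hbs.of_le (by exact_mod_cast le_top)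
  rw [contDiff_iff_contDiffAt]
  intro x
  by_cases h : b x < δ
  · have : trunc χ s a b =ᶠ[𝓝 x] fun _ => 0 := by
      filter_upwards [hb1.continuous.continuousAt.eventually_lt continuousAt_const h] with y hy
      simp [trunc, hz _ (le_of_lt hy)]
    exact contDiffAt_const.congr_of_eventuallyEq this
  · have hbx : 0 < b x := hδ.trans_le (not_lt.1 h)
    have hax := ha x
    have : s * b x + a x ≠ 0 := by positivity
    exact (hχ.comp hb1).contDiffAt.mul
      ((contDiff_const.mul ha1).contDiffAt.div ((contDiff_const.mul hb1).add ha1).contDiffAt this)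

theorem trunc_grad {d : ℕ} {χ : ℝ → ℝ} {δ c p : ℝ} (hp : 1 < p) (hδ : 0 < δ) (hχ : ContDiff ℝ 1 χ)
    (h0 : ∀ t, 0 ≤ χ t) (h1 : ∀ t, χ t ≤ 1) (hz : ∀ t ≤ δ, χ t = 0)
    (hc0 : 0 ≤ c) (hc : ∀ t, |deriv χ t| ≤ c) (hd : ∀ t, 2 * δ < t → deriv χ t = 0)
    {s : ℝ} (hs : 0 < s)
    {a b : Euc d → ℝ} (has : ContDiff ℝ (⊤ : ℕ∞) a) (hbs : ContDiff ℝ (⊤ : ℕ∞) b)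
    {x : Euc d} (hax : 0 < a x) (hbx : 0 < b x) :
    ENNReal.ofReal ‖fderiv ℝ (trunc χ s a b) x‖ ≤
      ENNReal.ofReal δ⁻¹ * ENNReal.ofReal (dfn p s a b x) ^ (1 / p) +
      {y | b y ≤ 2 * δ}.indicator (fun y => ENNReal.ofReal (s * c * ‖gradient b y‖)) x := by
  have hp0 : 0 < p := by linarith
  have hda : HasFDerivAt a (fderiv ℝ a x) x := (has.differentiable (by simp) x).hasFDerivAt
  have hdb : HasFDerivAt b (fderiv ℝ b x) x := (hbs.differentiable (by simp) x).hasFDerivAt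
  set D := s * b x + a x with hD
  have hDpos : 0 < D := by positivity
  have hχd : HasDerivAt χ (deriv χ (b x)) (b x) := (hχ.differentiable (by simp) _).hasDerivAt
  have hden : HasFDerivAt (fun y => s * b y + a y) (s • fderiv ℝ b x + fderiv ℝ a x) x :=
    (hdb.const_mul s).fun_add hda
  have hinv : HasFDerivAt (fun y => (s * b y + a y)⁻¹)
      ((-(D ^ 2)⁻¹) • (s • fderiv ℝ b x + fderiv ℝ a x)) x :=
    (hasDerivAt_inv hDpos.ne').comp_hasFDerivAt x hden
  have hR := (hda.const_mul s).fun_mul hinv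
  have hT := (hχd.comp_hasFDerivAt x hdb).fun_mul hR
  set g := (a x)⁻¹ • gradient a x - (b x)⁻¹ • gradient b x with hg
  have hgrad : gradient (trunc χ s a b) x =
      (deriv χ (b x) * (s * a x / D)) • gradient b x +
      (χ (b x) * (s ^ 2 * a x * b x / D ^ 2)) • g := by
    refine gradient_eq_of_fderiv fun y => ?_
    have hfe : trunc χ s a b = fun i => (χ ∘ b) i * (s * a i * (s * b i + a i)⁻¹) := by
      funext y
      simp only [trunc, Function.comp, div_eq_mul_inv]
    rw [hfe, hT.fderiv]
    simp only [smul_apply, add_apply, smul_eq_mul, Function.comp, hg, inner_add_left, inner_smul_left,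
      inner_sub_left, inner_gradient_left, conj_trivial, ← hD]
    field_simp
    rw [hD]; ring
  obtain ⟨r0, r1⟩ := ratio_bounds hs hax.le hbx.le
  rw [← norm_gradient_eq, hgrad]
  refine (ENNReal.ofReal_le_ofReal (norm_add_le _ _)).trans ?_
  rw [add_comm (‖_‖), ENNReal.ofReal_add (norm_nonneg _) (norm_nonneg _)]
  refine add_le_add ?_ ?_
  · have hdf : 0 ≤ dfn p s a b x := by unfold dfn; positivity
    rw [ENNReal.ofReal_rpow_of_nonneg hdf (by positivity), ← ENNReal.ofReal_mul (by positivity)]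
    refine ENNReal.ofReal_le_ofReal ?_
    have hkey : s * a x * b x / D * ‖g‖ ≤ dfn p s a b x ^ (1 / p) := by
      rw [← Real.rpow_le_rpow_iff (by positivity) (by positivity) hp0, ← Real.rpow_mul hdf,
        one_div_mul_cancel hp0.ne', Real.rpow_one, Real.mul_rpow (by positivity) (norm_nonneg _)]
      unfold dfn
      refine mul_le_mul_of_nonneg_right ?_ (by positivity)
      rw [Real.div_rpow (by positivity) hDpos.le, ← Real.mul_rpow hax.le (by positivity)]
      rw [show s * a x * b x = a x * (s * b x) by ring]
      refine div_le_div_of_nonneg_left (by positivity) (by positivity) ?_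
      rw [hD, add_comm]
      exact Real.add_rpow_le_rpow_add (by positivity) hax.le hp.le
    rw [norm_smul, Real.norm_of_nonneg (mul_nonneg (h0 _) (by positivity))]
    by_cases hb : b x ≤ δ
    · rw [hz _ hb]; simp only [zero_mul]; positivity
    · have hb' : δ < b x := not_le.1 hb
      have e1 : s / D ≤ δ⁻¹ := by
        rw [div_le_iff₀ hDpos, ← div_eq_inv_mul, le_div_iff₀ hδ, hD]
        nlinarith
      calc _ ≤ 1 * (s ^ 2 * a x * b x / D ^ 2) * ‖g‖ := by
            gcongr
            exact h1 _
        _ = (s / D) * (s * a x * b x / D * ‖g‖) := by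
            field_simp
        _ ≤ _ := mul_le_mul e1 hkey (by positivity) (by positivity)
  · by_cases hb : b x ≤ 2 * δ
    · rw [Set.indicator_of_mem (by exact hb)]
      refine ENNReal.ofReal_le_ofReal ?_
      rw [norm_smul, norm_mul, Real.norm_eq_abs, Real.norm_of_nonneg r0]
      refine mul_le_mul_of_nonneg_right ?_ (norm_nonneg _)
      rw [mul_comm s c]
      exact mul_le_mul (hc _) r1 r0 hc0
    · rw [hd _ (not_le.1 hb)]
      simp


theorem measurable_dfn {d : ℕ} {p s : ℝ} {a b : Euc d → ℝ} (has : ContDiff ℝ (⊤ : ℕ∞) a)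
    (hbs : ContDiff ℝ (⊤ : ℕ∞) b) : Measurable (dfn p s a b) := by
  have h1 := has.continuous.measurable
  have h2 := hbs.continuous.measurable
  have h3 := (continuous_gradient has).measurable
  have h4 := (continuous_gradient hbs).measurable
  unfold dfn
  exact (((h1.pow_const p).mul ((h2.const_mul s).pow_const p)).div
    ((h1.pow_const p).add ((h2.const_mul s).pow_const p))).mul
    (((h1.inv.smul h3).sub (h2.inv.smul h4)).norm.pow_const p)

theorem measure_bad_tendsto {d : ℕ} {K' : Set (Euc d)} (hK' : MeasurableSet K')
    (hfin : volume K' ≠ ⊤) {b : ℕ → Euc d → ℝ} (hbs : ∀ k, Continuous (b k)) {v : Euc d → ℝ} {δ : ℝ}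
    (hconv : ∀ᵐ x ∂(volume.restrict K'), Tendsto (fun k => b k x) atTop (𝓝 (v x)))
    (hv : ∀ x ∈ K', 2 * δ < v x) :
    Tendsto (fun k => (volume.restrict K') {y | b k y ≤ 2 * δ}) atTop (𝓝 0) := by
  haveI : IsFiniteMeasure (volume.restrict K') := ⟨by simpa using hfin.lt_top⟩
  have := tendsto_measure_of_ae_tendsto_indicator_of_isFiniteMeasure (μ := volume.restrict K')
    (A := ∅) atTop MeasurableSet.empty (As := fun k => {y | b k y ≤ 2 * δ})
    (fun k => (isClosed_le (hbs k) continuous_const).measurableSet) (by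
      filter_upwards [hconv, ae_restrict_mem hK'] with x hx hxK
      filter_upwards [hx.eventually_const_lt (hv x hxK)] with k hk
      simp [hk])
  simpa using this

theorem error_tendsto {d : ℕ} {p : ℝ} (hp : 1 < p) {K' : Set (Euc d)} (hK' : MeasurableSet K')
    (hfin : volume K' ≠ ⊤) {b : ℕ → Euc d → ℝ} (hbs : ∀ k, ContDiff ℝ (⊤ : ℕ∞) (b k))
    (hb0 : ∀ k x, 0 ≤ b k x) {v : Euc d → ℝ} {δ : ℝ} (hδ : 0 < δ)
    (hconv : ∀ᵐ x ∂(volume.restrict K'), Tendsto (fun k => b k x) atTop (𝓝 (v x)))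
    (hv : ∀ x ∈ K', 2 * δ < v x) {Cg : ENNReal} (hCg : Cg ≠ ⊤)
    (hG : ∀ k, ∫⁻ x in K', ENNReal.ofReal (‖gradient (b k) x‖ ^ p / (1 + b k x ^ p)) ≤ Cg)
    {c : ℝ} (hc : 0 ≤ c) :
    Tendsto (fun k => ∫⁻ x in K', {y | b k y ≤ 2 * δ}.indicator
      (fun y => ENNReal.ofReal (c * ‖gradient (b k) y‖)) x) atTop (𝓝 0) := by
  have hp0 : 0 < p := by linarith
  have hms : ∀ k, MeasurableSet {y | b k y ≤ 2 * δ} :=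
    fun k => (isClosed_le (hbs k).continuous continuous_const).measurableSet
  set M := ENNReal.ofReal (c ^ p * (1 + (2 * δ) ^ p)) * Cg with hM
  have hMt : M ≠ ⊤ := ENNReal.mul_ne_top ENNReal.ofReal_ne_top hCg
  have hbd : ∀ k, (∫⁻ x in K', {y | b k y ≤ 2 * δ}.indicator
      (fun y => ENNReal.ofReal (c * ‖gradient (b k) y‖)) x) ≤
      (((volume.restrict K') {y | b k y ≤ 2 * δ}) ^ (p - 1) * M) ^ (1 / p) := by
    intro k
    rw [← ENNReal.rpow_le_rpow_iff hp0, ← ENNReal.rpow_mul, one_div_mul_cancel hp0.ne',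
      ENNReal.rpow_one, lintegral_indicator (hms k)]
    have hgm := (continuous_gradient (hbs k)).measurable
    refine (jensen_lintegral _ hp ?_).trans ?_
    · exact (ENNReal.measurable_ofReal.comp (hgm.norm.const_mul c)).aemeasurable
    rw [Measure.restrict_apply_univ]
    refine mul_le_mul_right ?_ _
    calc _ ≤ ∫⁻ x in {y | b k y ≤ 2 * δ}, ENNReal.ofReal (c ^ p * (1 + (2 * δ) ^ p)) *
          ENNReal.ofReal (‖gradient (b k) x‖ ^ p / (1 + b k x ^ p)) ∂(volume.restrict K') := by
          refine setLIntegral_mono' (hms k) fun x hx => ?_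
          have hbx := hb0 k x
          rw [ENNReal.ofReal_rpow_of_nonneg (by positivity) hp0.le, ← ENNReal.ofReal_mul (by positivity),
            Real.mul_rpow hc (norm_nonneg _)]
          refine ENNReal.ofReal_le_ofReal ?_
          rw [mul_assoc]
          refine mul_le_mul_of_nonneg_left ?_ (by positivity)
          rw [mul_div_assoc', le_div_iff₀ (by positivity), mul_comm]
          refine mul_le_mul_of_nonneg_right ?_ (by positivity)
          have : b k x ^ p ≤ (2 * δ) ^ p := Real.rpow_le_rpow hbx hx hp0.le
          linarith
      _ ≤ ∫⁻ x in K', ENNReal.ofReal (c ^ p * (1 + (2 * δ) ^ p)) *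
          ENNReal.ofReal (‖gradient (b k) x‖ ^ p / (1 + b k x ^ p)) :=
          setLIntegral_le_lintegral _ _
      _ ≤ M := by
          rw [lintegral_const_mul' _ _ ENNReal.ofReal_ne_top]
          exact mul_le_mul_right (hG k) _
  have h0 := measure_bad_tendsto hK' hfin (fun k => (hbs k).continuous) hconv hv
  have h1 : Tendsto (fun k => (((volume.restrict K') {y | b k y ≤ 2 * δ}) ^ (p - 1) * M) ^ (1 / p))
      atTop (𝓝 0) := by
    have h2 := (ENNReal.continuous_rpow_const (y := p - 1)).continuousAt.tendsto.comp h0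
    have h3 := ENNReal.Tendsto.mul_const h2 (Or.inr hMt)
    have h4 := (ENNReal.continuous_rpow_const (y := 1 / p)).continuousAt.tendsto.comp h3
    simp only [ENNReal.zero_rpow_of_pos (show 0 < p - 1 by linarith), zero_mul,
      ENNReal.zero_rpow_of_pos (show 0 < 1 / p by positivity)] at h4
    exact h4
  exact tendsto_of_tendsto_of_tendsto_of_le_of_le tendsto_const_nhds h1 (fun _ => zero_le) hbd

theorem lim_lemma {d : ℕ} {p : ℝ} (hp : 1 < p) {K K' : Set (Euc d)} (hK : MeasurableSet K)
    (hK' : MeasurableSet K') (hfin : volume K' ≠ ⊤) {e : Euc d} (he : ‖e‖ ≤ 1) {τ : ℝ} (hτ : 0 < τ)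
    (hKK : ∀ x ∈ K, ∀ t ∈ Set.Icc 0 τ, x + t • e ∈ K')
    {a b : ℕ → Euc d → ℝ} (has : ∀ k, ContDiff ℝ (⊤ : ℕ∞) (a k)) (hbs : ∀ k, ContDiff ℝ (⊤ : ℕ∞) (b k))
    (ha0 : ∀ k x, 0 ≤ a k x) (hb0 : ∀ k x, 0 ≤ b k x)
    (hapos : ∀ k, ∀ x ∈ K', 0 < a k x) (hbpos : ∀ k, ∀ x ∈ K', 0 < b k x)
    {α v : Euc d → ℝ} {δ : ℝ} (hδ : 0 < δ)
    (haconv : ∀ x, Tendsto (fun k => a k x) atTop (𝓝 (α x)))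
    (hconv : ∀ᵐ x ∂(volume.restrict K'), Tendsto (fun k => b k x) atTop (𝓝 (v x)))
    (hv : ∀ x ∈ K', 2 * δ < v x) {Cg : ENNReal} (hCg : Cg ≠ ⊤)
    (hG : ∀ k, ∫⁻ x in K', ENNReal.ofReal (‖gradient (b k) x‖ ^ p / (1 + b k x ^ p)) ≤ Cg)
    {s : ℝ} (hs : 0 < s) {R : ℕ → ENNReal} {Rl : ENNReal} (hR : Tendsto R atTop (𝓝 Rl))
    (hD : ∀ k, ∫⁻ x in K', ENNReal.ofReal (dfn p s (a k) (b k) x) ≤ R k) :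
    ∫⁻ x in K, ENNReal.ofReal |s * α (x + τ • e) / (s * v (x + τ • e) + α (x + τ • e)) -
        s * α x / (s * v x + α x)| ^ p ≤
      2 ^ (p - 1) * ENNReal.ofReal τ ^ p * (ENNReal.ofReal δ⁻¹ ^ p * Rl) := by
  have hp0 : 0 < p := by linarith
  obtain ⟨χ, hχ, χ0, χ1, χz, χone, c, hc0, hc, hcd⟩ := exists_chi hδ
  have hα : ∀ x, 0 ≤ α x := fun x => ge_of_tendsto' (haconv x) fun k => ha0 k x
  have hlim : ∀ x ∈ K', Tendsto (fun k => b k x) atTop (𝓝 (v x)) →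
      Tendsto (fun k => trunc χ s (a k) (b k) x) atTop (𝓝 (s * α x / (s * v x + α x))) := by
    intro x hx hb
    have hvx := hv x hx
    have hαx := hα x
    have hvp : 0 < v x := by linarith
    have h1 : Tendsto (fun k => s * a k x / (s * b k x + a k x)) atTop
        (𝓝 (s * α x / (s * v x + α x))) :=
      ((haconv x).const_mul s).div ((hb.const_mul s).add (haconv x)) (by positivity)
    refine h1.congr' ?_
    filter_upwards [hb.eventually_const_lt hvx] with k hk
    simp [trunc, χone _ hk.le]
  set A : ℕ → Euc d → ENNReal := fun k x =>
    ENNReal.ofReal δ⁻¹ * ENNReal.ofReal (dfn p s (a k) (b k) x) ^ (1 / p)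
  set Er : ℕ → Euc d → ENNReal := fun k x =>
    {y | b k y ≤ 2 * δ}.indicator (fun y => ENNReal.ofReal (s * c * ‖gradient (b k) y‖)) x
  have hA : ∀ k, Measurable (A k) := fun k =>
    (((measurable_dfn (has k) (hbs k)).ennreal_ofReal).pow_const _).const_mul _
  have hEr : ∀ k, Measurable (Er k) := fun k =>
    ((((continuous_gradient (hbs k)).measurable.norm).const_mul _).ennreal_ofReal).indicator
      (isClosed_le (hbs k).continuous continuous_const).measurableSet
  have hErt : Tendsto (fun k => ∫⁻ x in K', Er k x) atTop (𝓝 0) :=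
    error_tendsto hp hK' hfin hbs hb0 hδ hconv hv hCg hG (mul_nonneg hs.le hc0)
  have hest : ∀ k, ∫⁻ x in K, ENNReal.ofReal |trunc χ s (a k) (b k) (x + τ • e) -
      trunc χ s (a k) (b k) x| ^ p ≤
      2 ^ (p - 1) * ENNReal.ofReal τ ^ p * (ENNReal.ofReal δ⁻¹ ^ p * R k) +
      2 ^ (p - 1) * ENNReal.ofReal (2 * s) ^ (p - 1) * ENNReal.ofReal τ * ∫⁻ y in K', Er k y := by
    intro k
    refine (translate_est hp (trunc_contDiff hδ hχ χz hs (has k) (hbs k) (ha0 k))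
      (trunc_abs_le χ0 χ1 hs (ha0 k) (hb0 k)) he hτ hK hK' hKK (hA k) (hEr k) fun y hy =>
        trunc_grad hp hδ hχ χ0 χ1 χz hc0 hc hcd hs (has k) (hbs k) (hapos k y hy)
          (hbpos k y hy)).trans ?_
    gcongr
    calc _ = ∫⁻ y in K', ENNReal.ofReal δ⁻¹ ^ p * ENNReal.ofReal (dfn p s (a k) (b k) y) := by
          refine lintegral_congr fun y => ?_
          simp only [A]
          rw [ENNReal.mul_rpow_of_nonneg _ _ hp0.le, ← ENNReal.rpow_mul, one_div_mul_cancel hp0.ne',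
            ENNReal.rpow_one]
      _ ≤ _ := by
          rw [lintegral_const_mul' _ _ (ENNReal.rpow_ne_top_of_nonneg hp0.le ENNReal.ofReal_ne_top)]
          exact mul_le_mul_right (hD k) _
  have hrt : Tendsto (fun k => 2 ^ (p - 1) * ENNReal.ofReal τ ^ p * (ENNReal.ofReal δ⁻¹ ^ p * R k) +
      2 ^ (p - 1) * ENNReal.ofReal (2 * s) ^ (p - 1) * ENNReal.ofReal τ * ∫⁻ y in K', Er k y) atTop
      (𝓝 (2 ^ (p - 1) * ENNReal.ofReal τ ^ p * (ENNReal.ofReal δ⁻¹ ^ p * Rl) +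
        2 ^ (p - 1) * ENNReal.ofReal (2 * s) ^ (p - 1) * ENNReal.ofReal τ * 0)) := by
    have hp1 : 0 ≤ p - 1 := by linarith
    have n1 : ∀ x : ℝ, ∀ q : ℝ, 0 ≤ q → ENNReal.ofReal x ^ q ≠ ⊤ := fun x q hq =>
      ENNReal.rpow_ne_top_of_nonneg hq ENNReal.ofReal_ne_top
    have n2 : (2 : ENNReal) ^ (p - 1) ≠ ⊤ := ENNReal.rpow_ne_top_of_nonneg hp1 (by simp)
    refine Tendsto.add ?_ ?_
    · exact ENNReal.Tendsto.const_mul (ENNReal.Tendsto.const_mul hR (Or.inr (n1 _ _ hp0.le)))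
        (Or.inr (ENNReal.mul_ne_top n2 (n1 _ _ hp0.le)))
    · exact ENNReal.Tendsto.const_mul hErt
        (Or.inr (ENNReal.mul_ne_top (ENNReal.mul_ne_top n2 (n1 _ _ hp1)) ENNReal.ofReal_ne_top))
  rw [mul_zero, add_zero] at hrt
  have hae : ∀ᵐ x ∂(volume.restrict K), Tendsto (fun k => ENNReal.ofReal
      |trunc χ s (a k) (b k) (x + τ • e) - trunc χ s (a k) (b k) x| ^ p) atTop
      (𝓝 (ENNReal.ofReal |s * α (x + τ • e) / (s * v (x + τ • e) + α (x + τ • e)) -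
        s * α x / (s * v x + α x)| ^ p)) := by
    rw [ae_restrict_iff' hK'] at hconv
    have h2 := (measurePreserving_add_right (volume : Measure (Euc d)) (τ • e)).quasiMeasurePreserving.ae hconv
    rw [ae_restrict_iff' hK]
    filter_upwards [hconv, h2] with x hx1 hx2 hxK
    have m1 : x ∈ K' := by simpa using hKK x hxK 0 ⟨le_rfl, hτ.le⟩
    have m2 : x + τ • e ∈ K' := hKK x hxK τ ⟨hτ.le, le_rfl⟩
    have := ((hlim _ m2 (hx2 m2)).sub (hlim _ m1 (hx1 m1))).abs
    exact (ENNReal.continuous_rpow_const (y := p)).continuousAt.tendsto.comp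
      (ENNReal.tendsto_ofReal this)
  calc _ = ∫⁻ x in K, liminf (fun k => ENNReal.ofReal
      |trunc χ s (a k) (b k) (x + τ • e) - trunc χ s (a k) (b k) x| ^ p) atTop := by
        refine lintegral_congr_ae ?_
        filter_upwards [hae] with x hx
        exact hx.liminf_eq.symm
    _ ≤ liminf (fun k => ∫⁻ x in K, ENNReal.ofReal
      |trunc χ s (a k) (b k) (x + τ • e) - trunc χ s (a k) (b k) x| ^ p) atTop := by
        refine lintegral_liminf_le fun k => ?_
        have hm : Measurable (trunc χ s (a k) (b k)) :=
          (trunc_contDiff hδ hχ χz hs (has k) (hbs k) (ha0 k)).continuous.measurable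
        have hm2 : Measurable fun x => trunc χ s (a k) (b k) (x + τ • e) :=
          hm.comp (measurable_id.add_const _)
        exact ((hm2.sub hm).abs).ennreal_ofReal.pow_const p
    _ ≤ liminf (fun k => 2 ^ (p - 1) * ENNReal.ofReal τ ^ p * (ENNReal.ofReal δ⁻¹ ^ p * R k) +
      2 ^ (p - 1) * ENNReal.ofReal (2 * s) ^ (p - 1) * ENNReal.ofReal τ * ∫⁻ y in K', Er k y) atTop :=
        liminf_le_liminf (Eventually.of_forall hest)
    _ = _ := hrt.liminf_eq


theorem gradient_zero_of_one {d : ℕ} {φ : Euc d → ℝ} {U : Set (Euc d)} (hU : IsOpen U)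
    (h : ∀ x ∈ U, φ x = 1) {x : Euc d} (hx : x ∈ U) : gradient φ x = 0 := by
  refine gradient_eq_of_fderiv fun y => ?_
  have : φ =ᶠ[𝓝 x] fun _ => 1 := by
    filter_upwards [hU.mem_nhds hx] with z hz using h z hz
  rw [this.fderiv_eq]; simp

theorem lint_grad {d : ℕ} {p : ℝ} (hp : 1 < p) {u : Euc d → ℝ} {Ω : Set (Euc d)} (hu : IsTestFun Ω u)
    (K : Set (Euc d)) :
    ∫⁻ x in K, ENNReal.ofReal (‖gradient u x‖ ^ p) = ENNReal.ofReal (energyQ K (fun _ => 0) p u) := by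
  unfold energyQ
  simp only [zero_mul, add_zero]
  rw [ofReal_integral_eq_lintegral_ofReal]
  · exact (test_integrable_grad hp hu.1 hu.2.1).restrict
  · exact Eventually.of_forall fun x => by positivity

theorem exists_reg {d : ℕ} {Ω : Set (Euc d)} (hΩ : IsOpen Ω) {V : Euc d → ℝ} {p : ℝ} (hp : 1 < p)
    (hV : LocBddPotential Ω V) (hQ : ∀ u : Euc d → ℝ, IsTestFun Ω u → 0 ≤ energyQ Ω V p u)
    {κ C C1 : ℝ} (hκ : 0 ≤ κ) (hC : 0 ≤ C)
    (hgap : ∀ X Y : Euc d, ‖X - Y‖ ^ p ≤ C * gapHalf p X Y + κ * ‖X‖ ^ p) (hC1 : 0 ≤ C1)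
    (hgap1 : ∀ X Y : Euc d, ‖X - Y‖ ^ p ≤ C1 * gapHalf p X Y + 1 * ‖X‖ ^ p)
    {K1 U0 : Set (Euc d)} (hK1 : IsCompact K1) (hK1Ω : K1 ⊆ Ω) {φ0 : Euc d → ℝ}
    (hφ0 : IsTestFun Ω φ0) (hU0 : IsOpen U0) (hKU0 : K1 ⊆ U0) (hφ1 : ∀ x ∈ U0, φ0 x = 1)
    {u w : Euc d → ℝ} (hu : IsTestFun Ω u) (hw : IsTestFun Ω w) {K' : Set (Euc d)}
    (hK' : MeasurableSet K') (hKK1 : K' ⊆ K1) {s : ℝ} (hs : 0 < s) {η : ℝ} (hη : 0 < η) :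
    ∃ a b : Euc d → ℝ, ContDiff ℝ (⊤ : ℕ∞) a ∧ ContDiff ℝ (⊤ : ℕ∞) b ∧ (∀ x, 0 ≤ a x) ∧ (∀ x, 0 ≤ b x) ∧
      (∀ x ∈ K1, 0 < a x) ∧ (∀ x ∈ K1, 0 < b x) ∧ (∀ x, |a x - abs (u x)| ≤ η) ∧ (∀ x, |b x - abs (w x)| ≤ η) ∧
      (∫⁻ x in K1, ENNReal.ofReal (‖gradient b x‖ ^ p / (1 + b x ^ p)) ≤
        ENNReal.ofReal (C1 * (energyQ Ω V p φ0 + η + (energyQ Ω V p w + η)))) ∧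
      (∫⁻ x in K', ENNReal.ofReal (dfn p s a b x) ≤
        ENNReal.ofReal (C * (energyQ Ω V p u + η + s ^ p * (energyQ Ω V p w + η))) +
        ENNReal.ofReal κ * ((∫⁻ x in K', ENNReal.ofReal (‖gradient u x‖ ^ p)) + ENNReal.ofReal η)) := by
  have hp0 : 0 < p := by linarith
  set L := ((K1 ∪ tsupport u) ∪ tsupport w) ∪ tsupport φ0 with hL
  have hLc : IsCompact L := ((hK1.union hu.2.1).union hw.2.1).union hφ0.2.1
  have hLΩ : L ⊆ Ω := Set.union_subset (Set.union_subset (Set.union_subset hK1Ω hu.2.2) hw.2.2) hφ0.2.2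
  obtain ⟨φ, hφt, hφn, hφle, U, hU, hLU, hφU⟩ := exists_cutoff hΩ hLc hLΩ
  have hne : ∀ x ∈ L, φ x ≠ 0 := fun x hx => by rw [hφU x (hLU hx)]; norm_num
  have hsu : ∀ x, φ x = 0 → x ∉ tsupport u := fun x h hx => hne x (by simp [hL, hx]) h
  have hsw : ∀ x, φ x = 0 → x ∉ tsupport w := fun x h hx => hne x (by simp [hL, hx]) h
  have hs0 : ∀ x, φ x = 0 → x ∉ tsupport φ0 := fun x h hx => hne x (by simp [hL, hx]) h
  have hV0 : LocBddPotential Ω (fun _ => (0 : ℝ)) := ⟨measurable_const, fun K _ _ => ⟨0, by simp⟩⟩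
  have ev1 := energy_reg_le Ω Ω hp hV hφt hφn hu hsu hη
  have ev2 := energy_reg_le Ω Ω hp hV hφt hφn hw hsw hη
  have ev3 := energy_reg_le Ω Ω hp hV hφt hφn hφ0 hs0 hη
  have ev4 := energy_reg_le Ω K' hp hV0 hφt hφn hu hsu hη
  have ev5 : ∀ᶠ ε in 𝓝[>] (0 : ℝ), ε ∈ Set.Ioo 0 η := Ioo_mem_nhdsGT hη
  obtain ⟨ε, e1, e2, e3, e4, hε, hεη⟩ := (ev1.and (ev2.and (ev3.and (ev4.and ev5)))).exists
  have hdist : ∀ (f : Euc d → ℝ) x, |reg ε φ f x - abs (f x)| ≤ η := by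
    intro f x
    have h1 := abs_le_reg (ε := ε) (φ := φ) (u := f) x
    have h2 := reg_le (u := f) hε.le hφn x
    rw [abs_of_nonneg (by linarith)]
    have : ε * φ x ≤ ε := mul_le_of_le_one_right hε.le (hφle x)
    linarith
  have hφK : ∀ x ∈ K1, φ x ≠ 0 := fun x hx => hne x (by simp [hL, hx])
  refine ⟨reg ε φ u, reg ε φ w, reg_contDiff hε hφn hφt.1 hu.1 hsu, reg_contDiff hε hφn hφt.1 hw.1 hsw,
    reg_nonneg, reg_nonneg, fun x hx => reg_pos hε (hφK x hx), fun x hx => reg_pos hε (hφK x hx),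
    hdist u, hdist w, ?_, ?_⟩
  · have := deficit_integral hp hV hQ zero_le_one hC1 hgap1 hε zero_lt_one hφn hφt hφ0 hs0 hw hsw
      hK1.measurableSet hK1Ω hφK
    have hg0 : ∀ x ∈ K1, gradient (reg ε φ φ0) x = 0 := by
      intro x hx
      have h1 := reg_gradient_le hε hφn hφt.1 hφ0.1 hs0 x
      rw [gradient_zero_of_one hU hφU (hLU (by simp [hL, hx])),
        gradient_zero_of_one hU0 hφ1 (hKU0 hx)] at h1
      simpa using h1
    have hz : ∫⁻ x in K1, ENNReal.ofReal (‖gradient (reg ε φ φ0) x‖ ^ p) = 0 := by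
      rw [← lintegral_zero (μ := volume.restrict K1)]
      refine setLIntegral_congr_fun hK1.measurableSet fun x hx => ?_
      rw [hg0 x hx, norm_zero, Real.zero_rpow hp0.ne', ENNReal.ofReal_zero]
    rw [hz, mul_zero, add_zero, Real.one_rpow, one_mul] at this
    refine le_trans ?_ (this.trans (ENNReal.ofReal_le_ofReal ?_))
    · refine setLIntegral_mono' hK1.measurableSet fun x hx => ENNReal.ofReal_le_ofReal ?_
      have hb : 0 < reg ε φ w x := reg_pos hε (hφK x hx)
      have ha : 1 ≤ reg ε φ φ0 x := by
        have := abs_le_reg (ε := ε) (φ := φ) (u := φ0) x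
        rw [hφ1 x (hKU0 hx), abs_one] at this
        exact this
      rw [hg0 x hx, smul_zero, zero_sub, norm_neg, norm_smul, norm_inv, Real.norm_of_nonneg hb.le,
        one_mul, Real.mul_rpow (by positivity) (norm_nonneg _), Real.inv_rpow hb.le]
      set A := reg ε φ φ0 x ^ p
      have hA : 1 ≤ A := Real.one_le_rpow ha hp0.le
      set Bp := reg ε φ w x ^ p
      have hB : 0 < Bp := by positivity
      set G := ‖gradient (reg ε φ w) x‖ ^ p
      have hG : 0 ≤ G := by positivity
      have : A * Bp / (A + Bp) * (Bp⁻¹ * G) = A * G / (A + Bp) := by field_simp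
      rw [this, div_le_div_iff₀ (by positivity) (by positivity)]
      have : 0 ≤ G * Bp * (A - 1) := mul_nonneg (by positivity) (by linarith)
      nlinarith
    · exact mul_le_mul_of_nonneg_left (by linarith) hC1
  · have := deficit_integral hp hV hQ hκ hC hgap hε hs hφn hφt hu hsu hw hsw
      hK' (hKK1.trans hK1Ω) (fun x hx => hφK x (hKK1 hx))
    refine this.trans (add_le_add (ENNReal.ofReal_le_ofReal ?_) (mul_le_mul_right ?_ _))
    · have : 0 < s ^ p := by positivity
      refine mul_le_mul_of_nonneg_left ?_ hC
      gcongr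
    · rw [lint_grad hp (reg_test hε hφn hφt hu.1 hsu), lint_grad hp hu]
      refine (ENNReal.ofReal_le_ofReal e4).trans ENNReal.ofReal_add_le

theorem ae_subseq {d : ℕ} {p : ℝ} (hp : 1 < p) {Ω K1 : Set (Euc d)} (hK1 : IsCompact K1) (hK1Ω : K1 ⊆ Ω)
    {v : Euc d → ℝ} (hvc : ContinuousOn v Ω) {w : ℕ → Euc d → ℝ} (hw : ∀ k, IsTestFun Ω (w k))
    (hlim : Tendsto (fun k => ∫ x in K1, |w k x - v x| ^ p) atTop (𝓝 0)) :
    ∃ n : ℕ → ℕ, StrictMono n ∧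
      ∀ᵐ x ∂(volume.restrict K1), Tendsto (fun k => w (n k) x) atTop (𝓝 (v x)) := by
  have hp0 : 0 < p := by linarith
  have hvK := hvc.mono hK1Ω
  have hcont : ∀ k, ContinuousOn (fun x => |w k x - v x| ^ p) K1 := fun k =>
    ((hw k).1.continuous.continuousOn.sub hvK).abs.rpow_const fun _ _ => Or.inr hp0.le
  have hvm : AEStronglyMeasurable v (volume.restrict K1) :=
    hvK.aestronglyMeasurable hK1.measurableSet
  have h : TendstoInMeasure (volume.restrict K1) w atTop v := by
    refine tendstoInMeasure_of_tendsto_eLpNorm (p := ENNReal.ofReal p) (by simpa using hp0)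
      (fun k => (hw k).1.continuous.aestronglyMeasurable) hvm ?_
    have h2 : ∀ k, eLpNorm (w k - v) (ENNReal.ofReal p) (volume.restrict K1) =
        (ENNReal.ofReal (∫ x in K1, |w k x - v x| ^ p)) ^ (1 / p) := by
      intro k
      rw [eLpNorm_eq_lintegral_rpow_enorm_toReal (by simpa using hp0) ENNReal.ofReal_ne_top,
        ENNReal.toReal_ofReal hp0.le, ofReal_integral_eq_lintegral_ofReal
          ((hcont k).integrableOn_compact hK1) (Eventually.of_forall fun x => by positivity)]
      congr 1
      refine lintegral_congr fun x => ?_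
      rw [Pi.sub_apply, Real.enorm_eq_ofReal_abs, ENNReal.ofReal_rpow_of_nonneg (abs_nonneg _) hp0.le]
    simp_rw [h2]
    have h3 := (ENNReal.continuous_rpow_const (y := 1 / p)).continuousAt.tendsto.comp
      (ENNReal.tendsto_ofReal hlim)
    rw [ENNReal.ofReal_zero, ENNReal.zero_rpow_of_pos (show 0 < 1 / p by positivity)] at h3
    exact h3
  exact h.exists_seq_tendsto_ae

theorem local_est {d : ℕ} {Ω : Set (Euc d)} (hΩ : IsOpen Ω) {V : Euc d → ℝ} {p : ℝ} (hp : 1 < p)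
    (hV : LocBddPotential Ω V) (hQ : ∀ u : Euc d → ℝ, IsTestFun Ω u → 0 ≤ energyQ Ω V p u)
    {v : Euc d → ℝ} (hgs : IsGroundState Ω V p v)
    {κ C : ℝ} (hκ : 0 ≤ κ) (hC : 0 ≤ C)
    (hgap : ∀ X Y : Euc d, ‖X - Y‖ ^ p ≤ C * gapHalf p X Y + κ * ‖X‖ ^ p)
    {K1 : Set (Euc d)} (hK1 : IsCompact K1) (hK1Ω : K1 ⊆ Ω) {δ : ℝ} (hδ : 0 < δ)
    (hv : ∀ x ∈ K1, 2 * δ < v x)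
    {u : Euc d → ℝ} (hu : IsTestFun Ω u) {K K' : Set (Euc d)} (hK : MeasurableSet K)
    (hK' : MeasurableSet K') (hKK1 : K' ⊆ K1) {e : Euc d} (he : ‖e‖ ≤ 1) {τ : ℝ} (hτ : 0 < τ)
    (hKK : ∀ x ∈ K, ∀ t ∈ Set.Icc 0 τ, x + t • e ∈ K') {s : ℝ} (hs : 0 < s) :
    ∫⁻ x in K, ENNReal.ofReal |s * |u (x + τ • e)| / (s * v (x + τ • e) + |u (x + τ • e)|) -
        s * |u x| / (s * v x + |u x|)| ^ p ≤
      2 ^ (p - 1) * ENNReal.ofReal τ ^ p * (ENNReal.ofReal δ⁻¹ ^ p *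
        (ENNReal.ofReal (C * energyQ Ω V p u) +
        ENNReal.ofReal κ * (∫⁻ x in K', ENNReal.ofReal (‖gradient u x‖ ^ p)))) := by
  obtain ⟨hvd, hvpos, w, ⟨hwt, hw0, B, -, -, -, -, hwQ⟩, hwlim⟩ := hgs
  obtain ⟨C1, hC1, hgap1⟩ := gap_ineq (d := d) hp one_pos
  obtain ⟨φ0, hφ0, -, -, U0, hU0, hKU0, hφ1⟩ := exists_cutoff hΩ hK1 hK1Ω
  obtain ⟨n, hn, hae⟩ := ae_subseq hp hK1 hK1Ω hvd.continuousOn hwt (hwlim K1 hK1Ω hK1)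
  have hη : ∀ k : ℕ, (0 : ℝ) < 1 / (k + 1) := fun k => by positivity
  have hηt : Tendsto (fun k : ℕ => (1 : ℝ) / (k + 1)) atTop (𝓝 0) := tendsto_one_div_add_atTop_nhds_zero_nat
  choose a b has hbs ha0 hb0 hap hbp had hbd hG hD using fun k : ℕ =>
    exists_reg hΩ hp hV hQ hκ hC hgap hC1.le hgap1 hK1 hK1Ω hφ0 hU0 hKU0 hφ1 hu (hwt (n k)) hK' hKK1
      hs (hη k)
  have hwQ' := hwQ.comp hn.tendsto_atTop
  obtain ⟨M, hM⟩ := hwQ'.bddAbove_range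
  have hM' : ∀ k, energyQ Ω V p (w (n k)) ≤ M := fun k => hM ⟨k, rfl⟩
  refine lim_lemma hp hK hK' (ne_top_of_le_ne_top hK1.measure_lt_top.ne (measure_mono hKK1)) he hτ hKK
    has hbs ha0 hb0 (fun k x hx => hap k x (hKK1 hx)) (fun k x hx => hbp k x (hKK1 hx)) (α := fun x => |u x|)
    hδ ?_ ?_ (fun x hx => hv x (hKK1 hx))
    (Cg := ENNReal.ofReal (C1 * (energyQ Ω V p φ0 + 1 + (M + 1)))) ENNReal.ofReal_ne_top ?_ hs ?_ hD
  · intro x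
    rw [tendsto_iff_dist_tendsto_zero]
    exact squeeze_zero (fun k => dist_nonneg) (fun k => had k x) hηt
  · refine (ae_restrict_of_ae_restrict_of_subset hKK1 hae).mono fun x hx => ?_
    have h1 : Tendsto (fun k => b k x - |w (n k) x|) atTop (𝓝 0) :=
      squeeze_zero_norm (fun k => hbd k x) hηt
    have h2 := h1.add hx
    rw [zero_add] at h2
    refine h2.congr fun k => ?_
    rw [abs_of_nonneg (hw0 _ _)]; ring
  · intro k
    refine (lintegral_mono_set hKK1).trans ((hG k).trans (ENNReal.ofReal_le_ofReal ?_))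
    have h1 : (1 : ℝ) / (k + 1) ≤ 1 := by
      rw [div_le_one (by positivity)]; linarith [(Nat.cast_nonneg k : (0 : ℝ) ≤ k)]
    exact mul_le_mul_of_nonneg_left (by linarith [hM' k]) hC1.le
  · have t1 : Tendsto (fun k : ℕ => C * (energyQ Ω V p u + 1 / ((k : ℝ) + 1) +
        s ^ p * (energyQ Ω V p (w (n k)) + 1 / ((k : ℝ) + 1)))) atTop
        (𝓝 (C * (energyQ Ω V p u + 0 + s ^ p * (0 + 0)))) :=
      ((tendsto_const_nhds.add hηt).add ((hwQ'.add hηt).const_mul _)).const_mul _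
    have t2 := ENNReal.tendsto_ofReal t1
    have t3 := ENNReal.tendsto_ofReal hηt
    have t4 := ENNReal.Tendsto.const_mul (a := ENNReal.ofReal κ)
      ((tendsto_const_nhds (x := ∫⁻ x in K', ENNReal.ofReal (‖gradient u x‖ ^ p))).add t3)
      (Or.inr ENNReal.ofReal_ne_top)
    have t5 := t2.add t4
    simpa using t5


theorem differentiableAt_quot {d : ℕ} {u v : Euc d → ℝ} {x : Euc d} (hu : DifferentiableAt ℝ u x)
    (hv : DifferentiableAt ℝ v x) (h : v x ≠ 0) : DifferentiableAt ℝ (fun y => u y / v y) x := by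
  have h1 : DifferentiableAt ℝ (fun y => (v y)⁻¹) x := (differentiableAt_inv h).comp x hv
  simp only [div_eq_mul_inv]
  exact hu.fun_mul h1

theorem diffquot_lim {d : ℕ} {u v : Euc d → ℝ} {x e : Euc d} {D : Euc d →L[ℝ] ℝ}
    (hω : HasFDerivAt (fun y => u y / v y) D x) {τ : ℕ → ℝ} (hτ : ∀ n, 0 < τ n)
    (hτ0 : Tendsto τ atTop (𝓝 0)) (hvpos : 0 < v x) (hvs : ∀ n, 0 < v (x + τ n • e)) :
    Tendsto (fun n => |(τ n)⁻¹ * |u (x + τ n • e)| / ((τ n)⁻¹ * v (x + τ n • e) + |u (x + τ n • e)|) -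
        (τ n)⁻¹ * |u x| / ((τ n)⁻¹ * v x + |u x|)| / τ n) atTop (𝓝 |D e|) := by
  set ω := fun y => u y / v y with hωd
  have hτ' : Tendsto τ atTop (𝓝[≠] 0) :=
    tendsto_nhdsWithin_iff.2 ⟨hτ0, Eventually.of_forall fun n => (hτ n).ne'⟩
  have h1 := ((hω.hasLineDerivAt e).tendsto_slope_zero.comp hτ').abs
  have hshift : Tendsto (fun n => x + τ n • e) atTop (𝓝 x) := by
    simpa using (hτ0.smul_const e).const_add x
  have h2 : Tendsto (fun n => ω (x + τ n • e)) atTop (𝓝 (ω x)) := hω.continuousAt.tendsto.comp hshift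
  have h3 : Tendsto (fun n => (1 + τ n * |ω (x + τ n • e)|) * (1 + τ n * |ω x|)) atTop
      (𝓝 ((1 + 0 * |ω x|) * (1 + 0 * |ω x|))) :=
    (tendsto_const_nhds.add (hτ0.mul h2.abs)).mul (tendsto_const_nhds.add (hτ0.mul_const _))
  have h4 := h1.div h3 (by simp)
  simp only [zero_mul, add_zero, mul_one, div_one] at h4
  refine h4.congr' ?_
  have hsgn : ∀ᶠ n in atTop, |(|ω (x + τ n • e)| - |ω x|)| = |ω (x + τ n • e) - ω x| := by
    rcases lt_trichotomy (ω x) 0 with h | h | h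
    · filter_upwards [h2.eventually_lt_const h] with n hn
      rw [abs_of_neg h, abs_of_neg hn, ← abs_neg]
      congr 1; ring
    · filter_upwards with n
      simp [h]
    · filter_upwards [h2.eventually_const_lt h] with n hn
      rw [abs_of_pos h, abs_of_pos hn]
  filter_upwards [hsgn] with n hn
  have hF : ∀ y, 0 < v y → (τ n)⁻¹ * |u y| / ((τ n)⁻¹ * v y + |u y|) = |ω y| / (1 + τ n * |ω y|) := by
    intro y hy
    have := hτ n
    simp only [hωd, abs_div, abs_of_pos hy]
    have : 0 < v y + τ n * |u y| := by positivity
    field_simp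
  rw [hF _ (hvs n), hF _ hvpos]
  have hτn := hτ n
  have e1 : |ω (x + τ n • e)| / (1 + τ n * |ω (x + τ n • e)|) - |ω x| / (1 + τ n * |ω x|) =
      (|ω (x + τ n • e)| - |ω x|) / ((1 + τ n * |ω (x + τ n • e)|) * (1 + τ n * |ω x|)) := by
    have p1 : 0 < 1 + τ n * |ω (x + τ n • e)| := by positivity
    have p2 : 0 < 1 + τ n * |ω x| := by positivity
    field_simp
    ring
  have p3 : 0 < (1 + τ n * |ω (x + τ n • e)|) * (1 + τ n * |ω x|) := by positivity
  rw [e1, abs_div (|ω (x + τ n • e)| - |ω x|), hn, abs_of_pos p3]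
  simp only [Pi.div_apply, Function.comp, smul_eq_mul, abs_mul, abs_inv, abs_of_pos hτn]
  field_simp

theorem lint_cthickening {d : ℕ} {K : Set (Euc d)} (hK : IsCompact K) {h : Euc d → ENNReal}
    (hfin : ∫⁻ x, h x ≠ ⊤) {τ : ℕ → ℝ} (hτ0 : Tendsto τ atTop (𝓝 0)) :
    Tendsto (fun n => ∫⁻ x in Metric.cthickening (τ n) K, h x) atTop (𝓝 (∫⁻ x in K, h x)) := by
  have := tendsto_measure_cthickening (μ := volume.withDensity h) (s := K)
    ⟨1, one_pos, by
      rw [withDensity_apply _ Metric.isClosed_cthickening.measurableSet]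
      exact ne_top_of_le_ne_top hfin (setLIntegral_le_lintegral _ _)⟩
  have h2 := this.comp hτ0
  rw [hK.isClosed.closure_eq, withDensity_apply _ hK.measurableSet] at h2
  refine h2.congr fun n => ?_
  simp only [Function.comp]
  rw [withDensity_apply _ Metric.isClosed_cthickening.measurableSet]

theorem dir_deriv_est {d : ℕ} {Ω : Set (Euc d)} (hΩ : IsOpen Ω) {V : Euc d → ℝ} {p : ℝ} (hp : 1 < p)
    (hV : LocBddPotential Ω V) (hQ : ∀ u : Euc d → ℝ, IsTestFun Ω u → 0 ≤ energyQ Ω V p u)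
    {v : Euc d → ℝ} (hgs : IsGroundState Ω V p v)
    {K : Set (Euc d)} (hK : IsCompact K) (hKΩ : K ⊆ Ω) :
    ∃ c : ℝ, 0 < c ∧ ∀ κ C : ℝ, 0 ≤ κ → 0 ≤ C →
      (∀ X Y : Euc d, ‖X - Y‖ ^ p ≤ C * gapHalf p X Y + κ * ‖X‖ ^ p) →
      ∀ u, IsTestFun Ω u → ∀ e : Euc d, ‖e‖ ≤ 1 →
      ∫⁻ x in K, ENNReal.ofReal |fderiv ℝ (fun y => u y / v y) x e| ^ p ≤
        ENNReal.ofReal c * (ENNReal.ofReal (C * energyQ Ω V p u) +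
          ENNReal.ofReal κ * (∫⁻ x in K, ENNReal.ofReal (‖gradient u x‖ ^ p))) := by
  have hp0 : 0 < p := by linarith
  obtain ⟨r, hr, hrΩ⟩ := hK.exists_cthickening_subset_open hΩ hKΩ
  have hK1 : IsCompact (Metric.cthickening r K) := hK.cthickening
  have hvc : ContinuousOn v Ω := hgs.1.continuousOn
  have hvpos := hgs.2.1
  obtain ⟨δ, hδ, hvδ⟩ : ∃ δ > 0, ∀ x ∈ Metric.cthickening r K, 2 * δ < v x := by
    obtain ⟨m, hm, hm'⟩ := hK1.exists_forall_le' (hvc.mono hrΩ) (a := 0) fun x hx => hvpos x (hrΩ hx)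
    exact ⟨m / 4, by positivity, fun x hx => by linarith [hm' x hx]⟩
  refine ⟨2 ^ (p - 1) * δ⁻¹ ^ p, by positivity, fun κ C hκ hC hgap u hu e he => ?_⟩
  set τ : ℕ → ℝ := fun n => r / (n + 1) with hτd
  have hτ : ∀ n, 0 < τ n := fun n => by simp only [hτd]; positivity
  have hτr : ∀ n, τ n ≤ r := fun n => div_le_self hr.le (by linarith [(Nat.cast_nonneg n : (0 : ℝ) ≤ n)])
  have hτ0 : Tendsto τ atTop (𝓝 0) := by
    have := tendsto_one_div_add_atTop_nhds_zero_nat (𝕜 := ℝ) |>.const_mul r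
    rw [mul_zero] at this
    refine this.congr fun n => ?_
    simp only [hτd]; ring
  have hsub : ∀ n, Metric.cthickening (τ n) K ⊆ Metric.cthickening r K := fun n =>
    Metric.cthickening_mono (hτr n) K
  have hKK : ∀ n, ∀ x ∈ K, ∀ t ∈ Set.Icc 0 (τ n), x + t • e ∈ Metric.cthickening (τ n) K := by
    intro n x hx t ht
    refine Metric.mem_cthickening_of_dist_le _ x _ _ hx ?_
    rw [dist_self_add_left, norm_smul, Real.norm_of_nonneg ht.1]
    calc t * ‖e‖ ≤ t * 1 := mul_le_mul_of_nonneg_left he ht.1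
      _ ≤ _ := by simpa using ht.2
  set G : ℕ → Euc d → ℝ := fun n x =>
    |(τ n)⁻¹ * |u (x + τ n • e)| / ((τ n)⁻¹ * v (x + τ n • e) + |u (x + τ n • e)|) -
        (τ n)⁻¹ * |u x| / ((τ n)⁻¹ * v x + |u x|)| with hG
  have hmem : ∀ n, ∀ x ∈ K, x + τ n • e ∈ Ω := fun n x hx =>
    hrΩ (hsub n (hKK n x hx _ ⟨(hτ n).le, le_rfl⟩))
  have hGc : ∀ n, ContinuousOn (G n) K := by
    intro n
    have hτn := hτ n
    have hsh : ContinuousOn (fun x => x + τ n • e) K := by fun_prop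
    have hus : ContinuousOn (fun x => |u (x + τ n • e)|) K :=
      (hu.1.continuous.comp_continuousOn hsh).abs
    have hvs : ContinuousOn (fun x => v (x + τ n • e)) K := hvc.comp hsh (hmem n)
    have hvK := hvc.mono hKΩ
    have huK : ContinuousOn (fun x => |u x|) K := hu.1.continuous.continuousOn.abs
    refine ContinuousOn.abs (ContinuousOn.sub ?_ ?_)
    · refine (continuousOn_const.mul hus).div ((continuousOn_const.mul hvs).add hus) fun x hx => ?_
      have := hvpos _ (hmem n x hx)
      positivity
    · refine (continuousOn_const.mul huK).div ((continuousOn_const.mul hvK).add huK) fun x hx => ?_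
      have := hvpos _ (hKΩ hx)
      positivity
  have hωd : ∀ x ∈ K, HasFDerivAt (fun y => u y / v y) (fderiv ℝ (fun y => u y / v y) x) x := by
    intro x hx
    have hvd : DifferentiableAt ℝ v x :=
      (hgs.1.differentiableOn (by simp)).differentiableAt (hΩ.mem_nhds (hKΩ hx))
    exact (differentiableAt_quot (hu.1.differentiable (by simp) x) hvd (hvpos x (hKΩ hx)).ne').hasFDerivAt
  set H : ENNReal := ∫⁻ x in K, ENNReal.ofReal (‖gradient u x‖ ^ p) with hH
  have hest : ∀ n, ∫⁻ x in K, ENNReal.ofReal (G n x / τ n) ^ p ≤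
      2 ^ (p - 1) * (ENNReal.ofReal δ⁻¹ ^ p * (ENNReal.ofReal (C * energyQ Ω V p u) +
        ENNReal.ofReal κ * (∫⁻ x in Metric.cthickening (τ n) K, ENNReal.ofReal (‖gradient u x‖ ^ p)))) := by
    intro n
    have := local_est hΩ hp hV hQ hgs hκ hC hgap hK1 hrΩ hδ hvδ hu hK.measurableSet
      Metric.isClosed_cthickening.measurableSet (hsub n) he (hτ n) (hKK n) (inv_pos.2 (hτ n))
    set X := ENNReal.ofReal δ⁻¹ ^ p * (ENNReal.ofReal (C * energyQ Ω V p u) +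
        ENNReal.ofReal κ * (∫⁻ x in Metric.cthickening (τ n) K, ENNReal.ofReal (‖gradient u x‖ ^ p)))
    have e0 : ENNReal.ofReal (τ n) ^ p ≠ 0 := by
      have := hτ n
      simp [ENNReal.rpow_eq_zero_iff, this]
    have e1 : ENNReal.ofReal (τ n) ^ p ≠ ⊤ := ENNReal.rpow_ne_top_of_nonneg hp0.le ENNReal.ofReal_ne_top
    have e2 : ∀ x, ENNReal.ofReal (G n x / τ n) ^ p =
        (ENNReal.ofReal (τ n) ^ p)⁻¹ * ENNReal.ofReal (G n x) ^ p := by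
      intro x
      rw [ENNReal.ofReal_div_of_pos (hτ n), ENNReal.div_rpow_of_nonneg _ _ hp0.le, div_eq_mul_inv, mul_comm]
    simp_rw [e2]
    rw [lintegral_const_mul' _ _ (ENNReal.inv_ne_top.2 e0)]
    calc _ ≤ (ENNReal.ofReal (τ n) ^ p)⁻¹ * (2 ^ (p - 1) * ENNReal.ofReal (τ n) ^ p * X) :=
          mul_le_mul_right this _
      _ = ((ENNReal.ofReal (τ n) ^ p)⁻¹ * ENNReal.ofReal (τ n) ^ p) * (2 ^ (p - 1) * X) := by ring
      _ = _ := by rw [ENNReal.inv_mul_cancel e0 e1, one_mul]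
  have hgm : Measurable fun x => ENNReal.ofReal (‖gradient u x‖ ^ p) :=
    ((continuous_gradient hu.1).measurable.norm.pow_const p).ennreal_ofReal
  have hgfin : ∫⁻ x, ENNReal.ofReal (‖gradient u x‖ ^ p) ≠ ⊤ := by
    have := lint_grad hp hu Set.univ
    rw [Measure.restrict_univ] at this
    rw [this]; exact ENNReal.ofReal_ne_top
  have hlim := lint_cthickening hK hgfin hτ0
  have n2 : (2 : ENNReal) ^ (p - 1) ≠ ⊤ := ENNReal.rpow_ne_top_of_nonneg (by linarith) (by simp)
  have n3 : ENNReal.ofReal δ⁻¹ ^ p ≠ ⊤ := ENNReal.rpow_ne_top_of_nonneg hp0.le ENNReal.ofReal_ne_top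
  have hlim2 := ENNReal.Tendsto.const_mul (a := (2 : ENNReal) ^ (p - 1))
    (ENNReal.Tendsto.const_mul (a := ENNReal.ofReal δ⁻¹ ^ p)
    ((tendsto_const_nhds (x := ENNReal.ofReal (C * energyQ Ω V p u))).add
      (ENNReal.Tendsto.const_mul (a := ENNReal.ofReal κ) hlim (Or.inr ENNReal.ofReal_ne_top)))
      (Or.inr n3)) (Or.inr n2)
  calc _ = ∫⁻ x in K, liminf (fun n => ENNReal.ofReal (G n x / τ n) ^ p) atTop := by
        refine setLIntegral_congr_fun hK.measurableSet fun x hx => ?_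
        have := diffquot_lim (e := e) (hωd x hx) hτ hτ0 (hvpos x (hKΩ hx)) fun n => hvpos _ (hmem n x hx)
        exact ((ENNReal.continuous_rpow_const (y := p)).continuousAt.tendsto.comp
          (ENNReal.tendsto_ofReal this)).liminf_eq.symm
    _ ≤ liminf (fun n => ∫⁻ x in K, ENNReal.ofReal (G n x / τ n) ^ p) atTop := by
        refine lintegral_liminf_le' fun n => ?_
        have := ((hGc n).aemeasurable hK.measurableSet (μ := volume))
        exact ((this.div_const _).ennreal_ofReal).pow_const p
    _ ≤ _ := liminf_le_liminf (Eventually.of_forall hest)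
    _ = _ := hlim2.liminf_eq
    _ = _ := by
        rw [ENNReal.ofReal_mul (p := (2 : ℝ) ^ (p - 1)) (by positivity), ← ENNReal.ofReal_rpow_of_pos (by norm_num),
          ← ENNReal.ofReal_rpow_of_pos (by positivity), ENNReal.ofReal_ofNat, mul_assoc]


theorem ennreal_absorb {X P : ENNReal} (hX : X ≠ ⊤) (h : X ≤ P + 2⁻¹ * X) : X ≤ 2 * P := by
  have h1 : 2⁻¹ * X + 2⁻¹ * X = X := by rw [← add_mul, ENNReal.inv_two_add_inv_two, one_mul]
  have h2 : 2⁻¹ * X ≠ ⊤ := ENNReal.mul_ne_top (by simp) hX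
  have h3 : 2⁻¹ * X ≤ P := by
    refine (ENNReal.add_le_add_iff_right h2).1 ?_
    rw [h1]; exact h
  calc X = 2 * (2⁻¹ * X) := by rw [← mul_assoc, ENNReal.mul_inv_cancel (by simp) (by simp), one_mul]
    _ ≤ _ := mul_le_mul_right h3 _

theorem opnorm_le_sum {d : ℕ} (L : Euc d →L[ℝ] ℝ) :
    ‖L‖ ≤ ∑ i, |L (EuclideanSpace.single i 1)| := by
  refine L.opNorm_le_bound (Finset.sum_nonneg fun i _ => abs_nonneg _) fun x => ?_
  have hx : x = ∑ i, x i • EuclideanSpace.single i (1 : ℝ) := by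
    ext j
    simp [Finset.sum_apply, Pi.single_apply]
  conv_lhs => rw [hx]
  rw [map_sum, Finset.sum_mul]
  refine (norm_sum_le _ _).trans (Finset.sum_le_sum fun i _ => ?_)
  rw [map_smul, norm_smul, mul_comm, Real.norm_eq_abs]
  exact mul_le_mul_of_nonneg_left (PiLp.norm_apply_le x i) (abs_nonneg _)

theorem grad_est {d : ℕ} {Ω : Set (Euc d)} (hΩ : IsOpen Ω) {V : Euc d → ℝ} {p : ℝ} (hp : 1 < p)
    (hV : LocBddPotential Ω V) (hQ : ∀ u : Euc d → ℝ, IsTestFun Ω u → 0 ≤ energyQ Ω V p u)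
    {v : Euc d → ℝ} (hgs : IsGroundState Ω V p v)
    {K : Set (Euc d)} (hK : IsCompact K) (hKΩ : K ⊆ Ω) {ε : ℝ} (hε : 0 < ε) :
    ∃ C : ℝ, 0 ≤ C ∧ ∀ u, IsTestFun Ω u →
      ∫⁻ x in K, ENNReal.ofReal ‖fderiv ℝ (fun y => u y / v y) x‖ ^ p ≤
        ENNReal.ofReal (C * energyQ Ω V p u) +
          ENNReal.ofReal ε * ∫⁻ x in K, ENNReal.ofReal |u x / v x| ^ p := by
  have hp0 : 0 < p := by linarith
  have hp1 : 0 < p - 1 := by linarith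
  obtain ⟨c, hc, hest⟩ := dir_deriv_est hΩ hp hV hQ hgs hK hKΩ
  have hvC := hgs.1
  have hvpos := hgs.2.1
  have hvc : ContinuousOn v K := hvC.continuousOn.mono hKΩ
  have hvdc : ContinuousOn (fderiv ℝ v) K := (hvC.continuousOn_fderiv_of_isOpen hΩ (by simp)).mono hKΩ
  obtain ⟨M1, hM1⟩ := hK.exists_bound_of_continuousOn hvc
  obtain ⟨M2, hM2⟩ := hK.exists_bound_of_continuousOn hvdc
  set M := max 1 (max M1 M2) with hM
  have hM0 : 0 < M := lt_of_lt_of_le one_pos (le_max_left _ _)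
  obtain ⟨A, hA⟩ : ∃ A : ℝ, A = (d : ℝ) ^ (p - 1) * d * c := ⟨_, rfl⟩
  have hA0 : 0 ≤ A := by rw [hA]; positivity
  have hA' : ENNReal.ofReal A = (d : ENNReal) ^ (p - 1) * d * ENNReal.ofReal c := by
    rw [hA, ENNReal.ofReal_mul (by positivity), ENNReal.ofReal_mul (by positivity),
      ← ENNReal.ofReal_rpow_of_nonneg (by positivity) hp1.le, ENNReal.ofReal_natCast]
  set N : ℝ := M ^ p * 2 ^ (p - 1) with hN
  have hN0 : 0 ≤ N := by positivity
  set κ : ℝ := min 1 ε / (2 * (A * N + 1)) with hκ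
  have hκ0 : 0 < κ := div_pos (lt_min one_pos hε) (by positivity)
  have hAκ : A * κ * N ≤ min 1 ε / 2 := by
    have h0 : 0 ≤ min 1 ε := (lt_min one_pos hε).le
    have h1 : A * N / (A * N + 1) ≤ 1 := (div_le_one (by positivity)).2 (by linarith)
    calc A * κ * N = min 1 ε / 2 * (A * N / (A * N + 1)) := by rw [hκ]; field_simp
      _ ≤ min 1 ε / 2 * 1 := mul_le_mul_of_nonneg_left h1 (by positivity)
      _ = _ := mul_one _
  obtain ⟨C, hC, hgap⟩ := gap_ineq (d := d) hp hκ0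
  refine ⟨2 * (A * C), by positivity, fun u hu => ?_⟩
  set ω := fun y => u y / v y with hω
  have hE := hest κ C hκ0.le hC.le hgap u hu
  have hQu := hQ u hu
  have hvd : ∀ x ∈ K, DifferentiableAt ℝ v x := fun x hx =>
    (hgs.1.differentiableOn (by simp)).differentiableAt (hΩ.mem_nhds (hKΩ hx))
  have hωd : ∀ x ∈ K, DifferentiableAt ℝ ω x := fun x hx =>
    differentiableAt_quot (hu.1.differentiable (by simp) x) (hvd x hx) (hvpos x (hKΩ hx)).ne'
  have hωC : ContDiffOn ℝ 1 ω Ω := by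
    have hu1 : ContDiff ℝ 1 u := hu.1.of_le (by exact_mod_cast le_top)
    exact hu1.contDiffOn.div hvC fun x hx => (hvpos x hx).ne'
  have hωdc : ContinuousOn (fderiv ℝ ω) K := (hωC.continuousOn_fderiv_of_isOpen hΩ (by simp)).mono hKΩ
  set X := ∫⁻ x in K, ENNReal.ofReal ‖fderiv ℝ ω x‖ ^ p with hX
  set Y := ∫⁻ x in K, ENNReal.ofReal |ω x| ^ p with hY
  set H : ENNReal := ∫⁻ x in K, ENNReal.ofReal (‖gradient u x‖ ^ p) with hH
  have hXt : X ≠ ⊤ := by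
    obtain ⟨b, hb⟩ := hK.exists_bound_of_continuousOn hωdc
    refine ne_top_of_le_ne_top (b := ∫⁻ x in K, ENNReal.ofReal b ^ p) ?_ ?_
    · rw [setLIntegral_const]
      exact ENNReal.mul_ne_top (ENNReal.rpow_ne_top_of_nonneg hp0.le ENNReal.ofReal_ne_top)
        hK.measure_lt_top.ne
    · exact setLIntegral_mono' hK.measurableSet fun x hx =>
        ENNReal.rpow_le_rpow (ENNReal.ofReal_le_ofReal (hb x hx)) hp0.le
  have h1 : X ≤ ENNReal.ofReal A * (ENNReal.ofReal (C * energyQ Ω V p u) + ENNReal.ofReal κ * H) := by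
    calc X ≤ ∫⁻ x in K, (d : ENNReal) ^ (p - 1) *
          ∑ i, ENNReal.ofReal |fderiv ℝ ω x (EuclideanSpace.single i 1)| ^ p := by
          refine lintegral_mono fun x => ?_
          have e1 := ENNReal.rpow_sum_le_const_mul_sum_rpow (Finset.univ : Finset (Fin d))
            (fun i => ENNReal.ofReal |fderiv ℝ ω x (EuclideanSpace.single i 1)|) hp.le
          rw [Finset.card_univ, Fintype.card_fin] at e1
          refine le_trans (ENNReal.rpow_le_rpow ?_ hp0.le) e1
          rw [← ENNReal.ofReal_sum_of_nonneg fun i _ => abs_nonneg _]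
          exact ENNReal.ofReal_le_ofReal (opnorm_le_sum _)
      _ = (d : ENNReal) ^ (p - 1) * ∑ i, ∫⁻ x in K,
            ENNReal.ofReal |fderiv ℝ ω x (EuclideanSpace.single i 1)| ^ p := by
          have hm : ∀ i : Fin d, Measurable fun x =>
              ENNReal.ofReal |fderiv ℝ ω x (EuclideanSpace.single i 1)| ^ p := fun i =>
            ((measurable_fderiv_apply_const ℝ ω _).abs).ennreal_ofReal.pow_const p
          rw [lintegral_const_mul _ (Finset.measurable_sum _ fun i _ => hm i),
            lintegral_finsetSum _ fun i _ => hm i]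
      _ ≤ (d : ENNReal) ^ (p - 1) * ∑ i : Fin d, (ENNReal.ofReal c *
            (ENNReal.ofReal (C * energyQ Ω V p u) + ENNReal.ofReal κ * H)) := by
          gcongr with i
          exact hE _ (by simp)
      _ = _ := by
          rw [Finset.sum_const, Finset.card_univ, Fintype.card_fin, nsmul_eq_mul, hA']
          ring
  have h2 : H ≤ ENNReal.ofReal N * (X + Y) := by
    have hYm : AEMeasurable (fun x => ENNReal.ofReal ‖fderiv ℝ ω x‖ ^ p) (volume.restrict K) :=
      ((measurable_fderiv ℝ ω).norm.ennreal_ofReal.pow_const p).aemeasurable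
    rw [hX, hY, ← lintegral_add_left' hYm, ← lintegral_const_mul' _ _ ENNReal.ofReal_ne_top]
    refine setLIntegral_mono' hK.measurableSet fun x hx => ?_
    have hux : ‖gradient u x‖ ≤ M * (‖fderiv ℝ ω x‖ + |ω x|) := by
      have hfd : fderiv ℝ u x = v x • fderiv ℝ ω x + ω x • fderiv ℝ v x := by
        have e1 := ((hvd x hx).hasFDerivAt.fun_mul (hωd x hx).hasFDerivAt)
        have e2 : u =ᶠ[𝓝 x] fun y => v y * ω y := by
          filter_upwards [hΩ.mem_nhds (hKΩ hx)] with y hy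
          have := (hvpos y hy).ne'
          simp only [hω]; field_simp
        rw [e2.fderiv_eq, e1.fderiv]
      rw [norm_gradient_eq, hfd]
      refine (norm_add_le _ _).trans ?_
      rw [norm_smul, norm_smul, mul_add, Real.norm_eq_abs (ω x), mul_comm (|ω x|)]
      gcongr
      · exact (hM1 x hx).trans ((le_max_left _ _).trans (le_max_right _ _))
      · exact (hM2 x hx).trans ((le_max_right _ _).trans (le_max_right _ _))
    calc ENNReal.ofReal (‖gradient u x‖ ^ p) = ENNReal.ofReal ‖gradient u x‖ ^ p :=
          (ENNReal.ofReal_rpow_of_nonneg (norm_nonneg _) hp0.le).symm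
      _ ≤ (ENNReal.ofReal M * (ENNReal.ofReal ‖fderiv ℝ ω x‖ + ENNReal.ofReal |ω x|)) ^ p := by
          refine ENNReal.rpow_le_rpow ?_ hp0.le
          rw [← ENNReal.ofReal_add (norm_nonneg _) (abs_nonneg _), ← ENNReal.ofReal_mul hM0.le]
          exact ENNReal.ofReal_le_ofReal hux
      _ = ENNReal.ofReal M ^ p * (ENNReal.ofReal ‖fderiv ℝ ω x‖ + ENNReal.ofReal |ω x|) ^ p :=
          ENNReal.mul_rpow_of_nonneg _ _ hp0.le
      _ ≤ ENNReal.ofReal M ^ p * (2 ^ (p - 1) *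
            (ENNReal.ofReal ‖fderiv ℝ ω x‖ ^ p + ENNReal.ofReal |ω x| ^ p)) := by
          gcongr
          exact ENNReal.rpow_add_le_mul_rpow_add_rpow _ _ hp.le
      _ = _ := by
          rw [hN, ENNReal.ofReal_mul (by positivity), ← ENNReal.ofReal_rpow_of_pos hM0,
            ← ENNReal.ofReal_rpow_of_pos (by norm_num), ENNReal.ofReal_ofNat, mul_assoc]
  have h3 : X ≤ (ENNReal.ofReal (A * C * energyQ Ω V p u) + ENNReal.ofReal (ε / 2) * Y) + 2⁻¹ * X := by
    calc X ≤ ENNReal.ofReal A * (ENNReal.ofReal (C * energyQ Ω V p u) +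
          ENNReal.ofReal κ * (ENNReal.ofReal N * (X + Y))) := by
          refine h1.trans ?_
          gcongr
      _ = ENNReal.ofReal (A * C * energyQ Ω V p u) + ENNReal.ofReal (A * κ * N) * Y +
          ENNReal.ofReal (A * κ * N) * X := by
          rw [mul_assoc A C, ENNReal.ofReal_mul hA0, ENNReal.ofReal_mul (p := A * κ) (by positivity),
            ENNReal.ofReal_mul (q := κ) hA0]
          ring
      _ ≤ _ := by
          have e2 : ENNReal.ofReal (1 / 2) = 2⁻¹ := by
            rw [one_div, ENNReal.ofReal_inv_of_pos (by norm_num), ENNReal.ofReal_ofNat]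
          rw [← e2]
          have m1 : min 1 ε ≤ 1 := min_le_left _ _
          have m2 : min 1 ε ≤ ε := min_le_right _ _
          gcongr
          · linarith
          · linarith
  refine (ennreal_absorb hXt h3).trans (le_of_eq ?_)
  rw [mul_add, ← mul_assoc]
  congr 1
  · rw [← ENNReal.ofReal_ofNat 2, ← ENNReal.ofReal_mul (by norm_num)]
    congr 1; ring
  · congr 1
    rw [← ENNReal.ofReal_ofNat 2, ← ENNReal.ofReal_mul (by norm_num)]
    congr 1; ring


theorem lint_scale {d : ℕ} (g : Euc d → ENNReal) (x0 : Euc d) {t : ℝ} (ht : t ≠ 0) :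
    ∫⁻ x, g (x0 + t • (x - x0)) = ENNReal.ofReal |(t ^ d)⁻¹| * ∫⁻ x, g x := by
  rw [lintegral_sub_right_eq_self (fun x => g (x0 + t • x)) x0]
  have h := Measure.map_addHaar_smul (volume : Measure (Euc d)) ht
  rw [finrank_euclideanSpace, Fintype.card_fin] at h
  have h2 := lintegral_map_equiv (μ := (volume : Measure (Euc d))) (fun z => g (x0 + z))
    (Homeomorph.smulOfNeZero t ht).toMeasurableEquiv
  simp only [Homeomorph.toMeasurableEquiv_coe, Homeomorph.smulOfNeZero_apply] at h2
  rw [← h2]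
  rw [h, lintegral_smul_measure, smul_eq_mul,
    lintegral_add_left_eq_self g x0]

theorem lint_scale_le {d : ℕ} {K K' : Set (Euc d)} (hK : MeasurableSet K) (hK' : MeasurableSet K')
    {x0 : Euc d} {t θ : ℝ} (hθ : 0 < θ) (ht : θ ≤ t)
    (hm : ∀ x ∈ K, x0 + t • (x - x0) ∈ K') (g : Euc d → ENNReal) :
    ∫⁻ x in K, g (x0 + t • (x - x0)) ≤ ENNReal.ofReal ((θ ^ d)⁻¹) * ∫⁻ x in K', g x := by
  have ht0 : 0 < t := hθ.trans_le ht
  rw [← lintegral_indicator hK, ← lintegral_indicator hK']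
  calc _ ≤ ∫⁻ x, (K'.indicator g) (x0 + t • (x - x0)) := by
        refine lintegral_mono fun x => ?_
        by_cases hx : x ∈ K
        · rw [Set.indicator_of_mem hx, Set.indicator_of_mem (hm x hx)]
        · rw [Set.indicator_of_notMem hx]; exact zero_le
    _ = _ := lint_scale _ x0 ht0.ne'
    _ ≤ _ := by
        gcongr
        rw [abs_of_pos (by positivity)]
        gcongr

theorem radial_poincare {d : ℕ} {p : ℝ} (hp : 1 < p) {Ω : Set (Euc d)} (hΩ : IsOpen Ω) {x0 : Euc d}
    {R θ : ℝ} (hR : 0 < R) (hθ : 0 < θ) (hθ1 : θ < 1) (hB : Metric.closedBall x0 R ⊆ Ω) :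
    ∃ C : ℝ, 0 < C ∧ ∀ ω : Euc d → ℝ, ContDiffOn ℝ 1 ω Ω →
      ∫⁻ x in Metric.closedBall x0 R, ENNReal.ofReal |ω x| ^ p ≤
        ENNReal.ofReal C * ((∫⁻ x in Metric.closedBall x0 R, ENNReal.ofReal ‖fderiv ℝ ω x‖ ^ p) +
          ∫⁻ x in Metric.closedBall x0 (θ * R), ENNReal.ofReal |ω x| ^ p) := by
  have hp0 : 0 < p := by linarith
  have hp1 : 0 < p - 1 := by linarith
  refine ⟨2 ^ (p - 1) * (θ ^ d)⁻¹ * (R ^ p + 1), by positivity, fun ω hω => ?_⟩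
  set K := Metric.closedBall x0 R with hK
  have hKm : MeasurableSet K := measurableSet_closedBall
  have hmem : ∀ x ∈ K, ∀ t, 0 ≤ t → x0 + t • (x - x0) ∈ Metric.closedBall x0 (t * R) := by
    intro x hx t ht
    rw [mem_closedBall_iff_norm, add_sub_cancel_left, norm_smul, Real.norm_of_nonneg ht]
    exact mul_le_mul_of_nonneg_left (mem_closedBall_iff_norm.1 hx) ht
  have hmemK : ∀ x ∈ K, ∀ t ∈ Set.Icc θ 1, x0 + t • (x - x0) ∈ K := fun x hx t ht =>
    Metric.closedBall_subset_closedBall (by nlinarith [ht.2]) (hmem x hx t (hθ.le.trans ht.1))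
  have hωdc : ContinuousOn (fderiv ℝ ω) Ω := hω.continuousOn_fderiv_of_isOpen hΩ (by simp)
  have hgm : Measurable fun x => ENNReal.ofReal ‖fderiv ℝ ω x‖ :=
    (measurable_fderiv ℝ ω).norm.ennreal_ofReal
  have hpt : ∀ x ∈ K, ENNReal.ofReal |ω x| ^ p ≤ 2 ^ (p - 1) * (ENNReal.ofReal R ^ p *
      (∫⁻ t in Set.Icc θ 1, ENNReal.ofReal ‖fderiv ℝ ω (x0 + t • (x - x0))‖ ^ p) +
      ENNReal.ofReal |ω (x0 + θ • (x - x0))| ^ p) := by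
    intro x hx
    set I := ∫⁻ t in Set.Icc θ 1, ENNReal.ofReal ‖fderiv ℝ ω (x0 + t • (x - x0))‖ with hI
    have hline : Continuous (fun t : ℝ => x0 + t • (x - x0)) := by fun_prop
    have hder : ∀ t ∈ Set.uIcc θ 1, HasDerivAt (fun t : ℝ => ω (x0 + t • (x - x0)))
        (fderiv ℝ ω (x0 + t • (x - x0)) (x - x0)) t := by
      intro t ht
      rw [Set.uIcc_of_le hθ1.le] at ht
      have h2 : HasDerivAt (fun t : ℝ => x0 + t • (x - x0)) (x - x0) t := by
        simpa using ((hasDerivAt_id t).smul_const (x - x0)).const_add x0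
      have h3 : DifferentiableAt ℝ ω (x0 + t • (x - x0)) :=
        (hω.differentiableOn (by simp)).differentiableAt (hΩ.mem_nhds (hB (hmemK x hx t ht)))
      exact h3.hasFDerivAt.comp_hasDerivAt t h2
    have hcont : ContinuousOn (fun t : ℝ => fderiv ℝ ω (x0 + t • (x - x0)) (x - x0)) (Set.uIcc θ 1) := by
      rw [Set.uIcc_of_le hθ1.le]
      exact (hωdc.comp hline.continuousOn fun t ht => hB (hmemK x hx t ht)).clm_apply continuousOn_const
    have h3 := intervalIntegral.integral_eq_sub_of_hasDerivAt hder hcont.intervalIntegrable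
    simp only [one_smul, add_sub_cancel] at h3
    have h4 : ENNReal.ofReal |ω x - ω (x0 + θ • (x - x0))| ≤ ENNReal.ofReal R * I := by
      rw [← h3, intervalIntegral.integral_of_le hθ1.le, ← integral_Icc_eq_integral_Ioc,
        ← Real.enorm_eq_ofReal_abs]
      refine (enorm_integral_le_lintegral_enorm _).trans ?_
      rw [hI, ← lintegral_const_mul' _ _ ENNReal.ofReal_ne_top]
      refine lintegral_mono fun t => ?_
      simp only []
      rw [Real.enorm_eq_ofReal_abs, ← ENNReal.ofReal_mul hR.le, mul_comm]
      refine ENNReal.ofReal_le_ofReal ?_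
      refine ((fderiv ℝ ω (x0 + t • (x - x0))).le_opNorm _).trans ?_
      exact mul_le_mul_of_nonneg_left (mem_closedBall_iff_norm.1 hx) (norm_nonneg _)
    have h5 : ENNReal.ofReal |ω x| ≤ ENNReal.ofReal R * I + ENNReal.ofReal |ω (x0 + θ • (x - x0))| := by
      refine le_trans ?_ (add_le_add_left h4 _)
      rw [← ENNReal.ofReal_add (abs_nonneg _) (abs_nonneg _)]
      refine ENNReal.ofReal_le_ofReal ?_
      have := abs_add_le (ω x - ω (x0 + θ • (x - x0))) (ω (x0 + θ • (x - x0)))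
      simpa using this
    have h6 : I ^ p ≤ ∫⁻ t in Set.Icc θ 1, ENNReal.ofReal ‖fderiv ℝ ω (x0 + t • (x - x0))‖ ^ p := by
      have := jensen_lintegral (volume.restrict (Set.Icc θ 1)) hp
        (f := fun t => ENNReal.ofReal ‖fderiv ℝ ω (x0 + t • (x - x0))‖)
        (hgm.comp hline.measurable).aemeasurable
      refine this.trans (mul_le_of_le_one_left zero_le ?_)
      rw [Measure.restrict_apply_univ, Real.volume_Icc]
      refine ENNReal.rpow_le_one ?_ hp1.le
      rw [← ENNReal.ofReal_one]
      exact ENNReal.ofReal_le_ofReal (by linarith)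
    calc _ ≤ (ENNReal.ofReal R * I + ENNReal.ofReal |ω (x0 + θ • (x - x0))|) ^ p :=
          ENNReal.rpow_le_rpow h5 hp0.le
      _ ≤ 2 ^ (p - 1) * ((ENNReal.ofReal R * I) ^ p + ENNReal.ofReal |ω (x0 + θ • (x - x0))| ^ p) :=
          ENNReal.rpow_add_le_mul_rpow_add_rpow _ _ hp.le
      _ ≤ _ := by
          rw [ENNReal.mul_rpow_of_nonneg _ _ hp0.le]
          gcongr
  have hjm : Measurable fun q : Euc d × ℝ => ENNReal.ofReal ‖fderiv ℝ ω (x0 + q.2 • (q.1 - x0))‖ ^ p :=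
    (hgm.comp (by fun_prop)).pow_const p
  have hm1 : Measurable fun x : Euc d => ∫⁻ t in Set.Icc θ 1,
      ENNReal.ofReal ‖fderiv ℝ ω (x0 + t • (x - x0))‖ ^ p :=
    Measurable.lintegral_prod_right' (f := fun q : Euc d × ℝ =>
      ENNReal.ofReal ‖fderiv ℝ ω (x0 + q.2 • (q.1 - x0))‖ ^ p) hjm
  set X := ∫⁻ x in K, ENNReal.ofReal ‖fderiv ℝ ω x‖ ^ p with hX
  set Z := ∫⁻ x in Metric.closedBall x0 (θ * R), ENNReal.ofReal |ω x| ^ p with hZ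
  have hi1 : ∫⁻ x in K, ∫⁻ t in Set.Icc θ 1, ENNReal.ofReal ‖fderiv ℝ ω (x0 + t • (x - x0))‖ ^ p ≤
      ENNReal.ofReal ((θ ^ d)⁻¹) * X := by
    rw [lintegral_lintegral_swap hjm.aemeasurable]
    calc _ ≤ ∫⁻ t in Set.Icc θ 1, ENNReal.ofReal ((θ ^ d)⁻¹) * X :=
          setLIntegral_mono' measurableSet_Icc fun t ht =>
            lint_scale_le hKm hKm hθ ht.1 (fun x hx => hmemK x hx t ht)
              (fun y => ENNReal.ofReal ‖fderiv ℝ ω y‖ ^ p)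
      _ ≤ _ := by
          rw [setLIntegral_const, Real.volume_Icc]
          refine mul_le_of_le_one_right zero_le ?_
          rw [← ENNReal.ofReal_one]
          exact ENNReal.ofReal_le_ofReal (by linarith)
  have hi2 : ∫⁻ x in K, ENNReal.ofReal |ω (x0 + θ • (x - x0))| ^ p ≤ ENNReal.ofReal ((θ ^ d)⁻¹) * Z :=
    lint_scale_le hKm measurableSet_closedBall hθ le_rfl (fun x hx => hmem x hx θ hθ.le)
      (fun y => ENNReal.ofReal |ω y| ^ p)
  have n2 : (2 : ENNReal) ^ (p - 1) ≠ ⊤ := ENNReal.rpow_ne_top_of_nonneg hp1.le (by simp)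
  calc _ ≤ ∫⁻ x in K, 2 ^ (p - 1) * (ENNReal.ofReal R ^ p *
      (∫⁻ t in Set.Icc θ 1, ENNReal.ofReal ‖fderiv ℝ ω (x0 + t • (x - x0))‖ ^ p) +
      ENNReal.ofReal |ω (x0 + θ • (x - x0))| ^ p) := setLIntegral_mono' hKm hpt
    _ = 2 ^ (p - 1) * (ENNReal.ofReal R ^ p *
      (∫⁻ x in K, ∫⁻ t in Set.Icc θ 1, ENNReal.ofReal ‖fderiv ℝ ω (x0 + t • (x - x0))‖ ^ p) +
      ∫⁻ x in K, ENNReal.ofReal |ω (x0 + θ • (x - x0))| ^ p) := by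
        rw [lintegral_const_mul' _ _ n2, lintegral_add_left (hm1.const_mul _), lintegral_const_mul _ hm1]
    _ ≤ 2 ^ (p - 1) * (ENNReal.ofReal R ^ p * (ENNReal.ofReal ((θ ^ d)⁻¹) * X) +
        ENNReal.ofReal ((θ ^ d)⁻¹) * Z) := by gcongr
    _ ≤ 2 ^ (p - 1) * ((ENNReal.ofReal R ^ p + 1) * (ENNReal.ofReal ((θ ^ d)⁻¹) * X) +
        (ENNReal.ofReal R ^ p + 1) * (ENNReal.ofReal ((θ ^ d)⁻¹) * Z)) := by
        exact mul_le_mul_right (add_le_add (mul_le_mul_left le_self_add _)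
          (le_mul_of_one_le_left zero_le le_add_self)) _
    _ = _ := by
        rw [ENNReal.ofReal_mul (by positivity), ENNReal.ofReal_mul (by positivity),
          ENNReal.ofReal_add (by positivity) zero_le_one, ENNReal.ofReal_one,
          ← ENNReal.ofReal_rpow_of_pos hR, ← ENNReal.ofReal_rpow_of_pos (by norm_num : (0:ℝ) < 2),
          ENNReal.ofReal_ofNat]
        ring


theorem ball_est {d : ℕ} {Ω : Set (Euc d)} (hΩ : IsOpen Ω) {V : Euc d → ℝ} {p : ℝ} (hp : 1 < p)
    (hV : LocBddPotential Ω V) (hQ : ∀ u : Euc d → ℝ, IsTestFun Ω u → 0 ≤ energyQ Ω V p u)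
    {v : Euc d → ℝ} (hgs : IsGroundState Ω V p v) {x0 : Euc d} {R θ : ℝ} (hR : 0 < R)
    (hθ : 0 < θ) (hθ1 : θ < 1) (hB : Metric.closedBall x0 R ⊆ Ω) :
    ∃ C : ENNReal, C ≠ ⊤ ∧ ∀ u : Euc d → ℝ, IsTestFun Ω u →
      ∫⁻ x in Metric.closedBall x0 R, ENNReal.ofReal |u x| ^ p ≤
        C * (ENNReal.ofReal (energyQ Ω V p u) +
          ∫⁻ x in Metric.closedBall x0 (θ * R), ENNReal.ofReal |u x| ^ p) := by
  have hp0 : 0 < p := by linarith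
  obtain ⟨A, hA, hP⟩ := radial_poincare hp hΩ hR hθ hθ1 hB
  have hK : IsCompact (Metric.closedBall x0 R) := isCompact_closedBall x0 R
  obtain ⟨C, hC, hG⟩ := grad_est hΩ hp hV hQ hgs hK hB (ε := 1 / (2 * A)) (by positivity)
  have hvpos := hgs.2.1
  have hvc : ContinuousOn v (Metric.closedBall x0 R) := hgs.1.continuousOn.mono hB
  have hne : (Metric.closedBall x0 R).Nonempty := ⟨x0, Metric.mem_closedBall_self hR.le⟩
  obtain ⟨y, hy, hmin⟩ := hK.exists_isMinOn hne hvc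
  obtain ⟨z, hz, hmax⟩ := hK.exists_isMaxOn hne hvc
  obtain ⟨m, hm⟩ : ∃ m, m = v y := ⟨_, rfl⟩
  obtain ⟨M, hM⟩ : ∃ M, M = v z := ⟨_, rfl⟩
  have hm0 : 0 < m := hm ▸ hvpos y (hB hy)
  have hM0 : 0 < M := hM ▸ hvpos z (hB hz)
  have hsub : Metric.closedBall x0 (θ * R) ⊆ Metric.closedBall x0 R :=
    Metric.closedBall_subset_closedBall (by nlinarith)
  refine ⟨ENNReal.ofReal M ^ p * (2 * ENNReal.ofReal A * (ENNReal.ofReal C + ENNReal.ofReal m⁻¹ ^ p)),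
    by finiteness, fun u hu => ?_⟩
  set ω := fun y => u y / v y with hω
  have hωC : ContDiffOn ℝ 1 ω Ω := by
    have hu1 : ContDiff ℝ 1 u := hu.1.of_le (by exact_mod_cast le_top)
    exact hu1.contDiffOn.div hgs.1 fun x hx => (hvpos x hx).ne'
  have h1 := hP ω hωC
  have h2 := hG u hu
  have hz1 : ∫⁻ x in Metric.closedBall x0 (θ * R), ENNReal.ofReal |ω x| ^ p ≤
      ENNReal.ofReal m⁻¹ ^ p * ∫⁻ x in Metric.closedBall x0 (θ * R), ENNReal.ofReal |u x| ^ p := by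
    rw [← lintegral_const_mul' _ _ (by finiteness)]
    refine setLIntegral_mono' measurableSet_closedBall fun x hx => ?_
    rw [← ENNReal.mul_rpow_of_nonneg _ _ hp0.le, ← ENNReal.ofReal_mul (by positivity)]
    refine ENNReal.rpow_le_rpow (ENNReal.ofReal_le_ofReal ?_) hp0.le
    have hx' := hsub hx
    have : m ≤ v x := hm ▸ hmin hx'
    simp only [hω]
    rw [abs_div, abs_of_pos (hvpos x (hB hx')), div_eq_inv_mul]
    gcongr
  have hz2 : ∫⁻ x in Metric.closedBall x0 R, ENNReal.ofReal |u x| ^ p ≤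
      ENNReal.ofReal M ^ p * ∫⁻ x in Metric.closedBall x0 R, ENNReal.ofReal |ω x| ^ p := by
    rw [← lintegral_const_mul' _ _ (by finiteness)]
    refine setLIntegral_mono' measurableSet_closedBall fun x hx => ?_
    rw [← ENNReal.mul_rpow_of_nonneg _ _ hp0.le, ← ENNReal.ofReal_mul hM0.le]
    refine ENNReal.rpow_le_rpow (ENNReal.ofReal_le_ofReal ?_) hp0.le
    have : v x ≤ M := hM ▸ hmax hx
    have hvx := hvpos x (hB hx)
    have e : u x = v x * ω x := by simp only [hω]; field_simp
    rw [e, abs_mul, abs_of_pos hvx]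
    gcongr
  have hfin : ∫⁻ x in Metric.closedBall x0 R, ENNReal.ofReal |ω x| ^ p ≠ ⊤ := by
    obtain ⟨N, hN⟩ := hK.exists_bound_of_continuousOn (hωC.continuousOn.mono hB)
    refine ne_top_of_le_ne_top ?_ (setLIntegral_mono' (g := fun _ => ENNReal.ofReal N ^ p)
      measurableSet_closedBall fun x hx =>
        ENNReal.rpow_le_rpow (ENNReal.ofReal_le_ofReal (hN x hx)) hp0.le)
    rw [setLIntegral_const]
    exact ENNReal.mul_ne_top (by finiteness) hK.measure_lt_top.ne
  set X := ∫⁻ x in Metric.closedBall x0 R, ENNReal.ofReal |ω x| ^ p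
  set Z := ∫⁻ x in Metric.closedBall x0 (θ * R), ENNReal.ofReal |ω x| ^ p
  set U := ∫⁻ x in Metric.closedBall x0 (θ * R), ENNReal.ofReal |u x| ^ p
  have h3 : X ≤ 2 * (ENNReal.ofReal A * (ENNReal.ofReal (C * energyQ Ω V p u) + Z)) := by
    refine ennreal_absorb hfin ?_
    have e : ENNReal.ofReal A * ENNReal.ofReal (1 / (2 * A)) = 2⁻¹ := by
      rw [← ENNReal.ofReal_mul hA.le, show A * (1 / (2 * A)) = 2⁻¹ by field_simp,
        ENNReal.ofReal_inv_of_pos (by norm_num), ENNReal.ofReal_ofNat]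
    calc X ≤ _ := h1
      _ ≤ ENNReal.ofReal A * ((ENNReal.ofReal (C * energyQ Ω V p u) +
          ENNReal.ofReal (1 / (2 * A)) * X) + Z) := by gcongr
      _ = _ := by rw [← e]; ring
  calc _ ≤ ENNReal.ofReal M ^ p * X := hz2
    _ ≤ ENNReal.ofReal M ^ p * (2 * (ENNReal.ofReal A * (ENNReal.ofReal C * ENNReal.ofReal (energyQ Ω V p u)
        + ENNReal.ofReal m⁻¹ ^ p * U))) := by
        rw [← ENNReal.ofReal_mul hC]
        refine mul_le_mul_right (h3.trans ?_) _
        gcongr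
    _ ≤ ENNReal.ofReal M ^ p * (2 * (ENNReal.ofReal A *
        ((ENNReal.ofReal C + ENNReal.ofReal m⁻¹ ^ p) * ENNReal.ofReal (energyQ Ω V p u)
        + (ENNReal.ofReal C + ENNReal.ofReal m⁻¹ ^ p) * U))) := by
        refine mul_le_mul_right (mul_le_mul_right (mul_le_mul_right (add_le_add
          (mul_le_mul_left le_self_add _) (mul_le_mul_left le_add_self _)) _) _) _
    _ = _ := by ring

def GoodPt {d : ℕ} (Ω B : Set (Euc d)) (V : Euc d → ℝ) (p : ℝ) (x : Euc d) : Prop :=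
  ∃ r : ℝ, 0 < r ∧ ∃ C : ENNReal, C ≠ ⊤ ∧ ∀ u : Euc d → ℝ, IsTestFun Ω u →
    ∫⁻ y in Metric.ball x r, ENNReal.ofReal |u y| ^ p ≤
      C * (ENNReal.ofReal (energyQ Ω V p u) + ∫⁻ y in B, ENNReal.ofReal |u y| ^ p)

theorem all_good {d : ℕ} {Ω : Set (Euc d)} (hΩ : IsOpen Ω) (hΩc : IsConnected Ω) {V : Euc d → ℝ}
    {p : ℝ} (hp : 1 < p)
    (hV : LocBddPotential Ω V) (hQ : ∀ u : Euc d → ℝ, IsTestFun Ω u → 0 ≤ energyQ Ω V p u)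
    {v : Euc d → ℝ} (hgs : IsGroundState Ω V p v) {B : Set (Euc d)} (hBo : IsOpen B)
    (hBne : B.Nonempty) (hBΩ : closure B ⊆ Ω) : ∀ x ∈ Ω, GoodPt Ω B V p x := by
  have key : Ω ⊆ {x | GoodPt Ω B V p x} := by
    refine hΩc.isPreconnected.subset_of_closure_inter_subset ?_ ?_ ?_
    · rw [Metric.isOpen_iff]
      rintro x ⟨r, hr, C, hC, h⟩
      refine ⟨r / 2, by positivity, fun y hy => ⟨r / 2, by positivity, C, hC, fun u hu => ?_⟩⟩
      refine (lintegral_mono_set (Metric.ball_subset_ball' ?_)).trans (h u hu)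
      have := Metric.mem_ball.1 hy
      linarith
    · obtain ⟨x, hx⟩ := hBne
      obtain ⟨r, hr, hb⟩ := Metric.isOpen_iff.1 hBo x hx
      refine ⟨x, hBΩ (subset_closure hx), r, hr, 1, by simp, fun u hu => ?_⟩
      rw [one_mul]
      exact (lintegral_mono_set hb).trans le_add_self
    · rintro x ⟨hx, hxΩ⟩
      obtain ⟨s, hs, hb⟩ := Metric.isOpen_iff.1 hΩ x hxΩ
      obtain ⟨ρ, hρ⟩ : ∃ ρ, ρ = s / 4 := ⟨_, rfl⟩
      have hρ0 : 0 < ρ := by rw [hρ]; positivity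
      obtain ⟨y, ⟨r, hr, C, hC, h⟩, hxy⟩ := Metric.mem_closure_iff.1 hx ρ hρ0
      have hB2 : Metric.closedBall y (2 * ρ) ⊆ Ω := by
        refine subset_trans ?_ hb
        refine Metric.closedBall_subset_ball' ?_
        rw [dist_comm]; linarith
      have hθ0 : 0 < min (1 / 2) (r / (4 * ρ)) := lt_min (by norm_num) (by positivity)
      obtain ⟨C', hC', h'⟩ := ball_est hΩ hp hV hQ hgs (R := 2 * ρ) (θ := min (1 / 2) (r / (4 * ρ)))
        (by positivity) hθ0 ((min_le_left _ _).trans_lt (by norm_num)) hB2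
      have hθr : min (1 / 2) (r / (4 * ρ)) * (2 * ρ) < r := by
        calc _ ≤ r / (4 * ρ) * (2 * ρ) := by gcongr; exact min_le_right _ _
          _ = r / 2 := by field_simp; norm_num
          _ < r := by linarith
      refine ⟨ρ, hρ0, C' * (1 + C), by finiteness, fun u hu => ?_⟩
      calc _ ≤ ∫⁻ z in Metric.closedBall y (2 * ρ), ENNReal.ofReal |u z| ^ p :=
            lintegral_mono_set ((Metric.ball_subset_ball' (by linarith)).trans
              Metric.ball_subset_closedBall)
        _ ≤ _ := h' u hu
        _ ≤ C' * ((ENNReal.ofReal (energyQ Ω V p u) + ∫⁻ y in B, ENNReal.ofReal |u y| ^ p) +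
            C * (ENNReal.ofReal (energyQ Ω V p u) + ∫⁻ y in B, ENNReal.ofReal |u y| ^ p)) := by
            refine mul_le_mul_right (add_le_add le_self_add ?_) _
            exact (lintegral_mono_set (Metric.closedBall_subset_ball hθr)).trans (h u hu)
        _ = _ := by ring
  exact fun x hx => key hx

theorem exists_weight {d : ℕ} {Ω : Set (Euc d)} (hΩ : IsOpen Ω) (hne : Ω.Nonempty) {V : Euc d → ℝ}
    {p : ℝ} (hp : 1 < p)
    (hQ : ∀ u : Euc d → ℝ, IsTestFun Ω u → 0 ≤ energyQ Ω V p u) {B : Set (Euc d)}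
    (hg : ∀ x ∈ Ω, GoodPt Ω B V p x) :
    ∃ W : Euc d → ℝ, ContinuousOn W Ω ∧ (∀ x ∈ Ω, 0 < W x) ∧
      ∀ u : Euc d → ℝ, IsTestFun Ω u →
        (∫ x in Ω, W x * |u x| ^ p) ≤ energyQ Ω V p u + ∫ x in B, |u x| ^ p := by
  have hp0 : 0 < p := by linarith
  choose! r hr C hC hest using hg
  obtain ⟨T, hTΩ, hTc, hT⟩ := TopologicalSpace.countable_cover_nhdsWithin
    (f := fun x => Metric.ball x (r x)) (s := Ω)
    (fun x hx => mem_nhdsWithin_of_mem_nhds (Metric.ball_mem_nhds x (hr x hx)))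
  have hTne : T.Nonempty := by
    obtain ⟨x, hx⟩ := hne
    obtain ⟨y, hy, -⟩ := Set.mem_iUnion₂.1 (hT hx)
    exact ⟨y, hy⟩
  obtain ⟨f, rfl⟩ := hTc.exists_eq_range hTne
  have hf : ∀ i, f i ∈ Ω := fun i => hTΩ ⟨i, rfl⟩
  set a : ℕ → ℝ := fun i => (1 / 2) ^ i / 2 / (1 + (C (f i)).toReal) with ha
  have ha0 : ∀ i, 0 < a i := fun i => by
    have : 0 ≤ (C (f i)).toReal := ENNReal.toReal_nonneg
    simp only [ha]; positivity
  have hale : ∀ i, a i ≤ (1 / 2) ^ i / 2 := fun i => by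
    have : 0 ≤ (C (f i)).toReal := ENNReal.toReal_nonneg
    exact div_le_self (by positivity) (by linarith)
  set g : ℕ → Euc d → ℝ := fun i x => a i * max 0 (min 1 (r (f i) - dist x (f i))) with hgd
  have hg0 : ∀ i x, 0 ≤ g i x := fun i x => mul_nonneg (ha0 i).le (le_max_left _ _)
  have hga : ∀ i x, g i x ≤ a i := fun i x =>
    mul_le_of_le_one_right (ha0 i).le (max_le zero_le_one (min_le_left _ _))
  have hgc : ∀ i, Continuous (g i) := fun i => by simp only [hgd]; fun_prop
  have hsum : Summable fun i : ℕ => ((1 : ℝ) / 2) ^ i / 2 :=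
    (summable_geometric_of_lt_one (by norm_num) (by norm_num)).div_const 2
  have hgs : ∀ x, Summable fun i => g i x := fun x =>
    Summable.of_nonneg_of_le (fun i => hg0 i x) (fun i => (hga i x).trans (hale i)) hsum
  have hWc : Continuous fun x => ∑' i, g i x := by
    refine continuous_tsum hgc hsum fun i x => ?_
    rw [Real.norm_of_nonneg (hg0 i x)]
    exact (hga i x).trans (hale i)
  refine ⟨fun x => ∑' i, g i x, hWc.continuousOn, fun x hx => ?_, fun u hu => ?_⟩
  · obtain ⟨y, ⟨i, rfl⟩, hi⟩ := Set.mem_iUnion₂.1 (hT hx)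
    refine (hgs x).tsum_pos (fun i => hg0 i x) i ?_
    refine mul_pos (ha0 i) (lt_max_of_lt_right (lt_min one_pos ?_))
    have := Metric.mem_ball.1 hi
    linarith
  · have huc : Continuous fun x => |u x| ^ p :=
      hu.1.continuous.abs.rpow_const fun _ => Or.inr hp0.le
    have hcs : HasCompactSupport fun x => |u x| ^ p := by
      refine HasCompactSupport.of_support_subset_isCompact hu.2.1 fun x hx => subset_closure ?_
      intro h; apply hx; simp [h, Real.zero_rpow hp0.ne']
    have hupint : Integrable fun x => |u x| ^ p := huc.integrable_of_hasCompactSupport hcs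
    have e0 : ∀ x, ENNReal.ofReal |u x| ^ p = ENNReal.ofReal (|u x| ^ p) := fun x =>
      ENNReal.ofReal_rpow_of_nonneg (abs_nonneg _) hp0.le
    have hu0 : ∀ x, 0 ≤ |u x| ^ p := fun x => by positivity
    have hIB : 0 ≤ ∫ x in B, |u x| ^ p := integral_nonneg hu0
    set E : ENNReal := ENNReal.ofReal (energyQ Ω V p u) + ∫⁻ y in B, ENNReal.ofReal |u y| ^ p with hE
    have hEe : E = ENNReal.ofReal (energyQ Ω V p u + ∫ x in B, |u x| ^ p) := by
      rw [ENNReal.ofReal_add (hQ u hu) hIB, hE,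
        ofReal_integral_eq_lintegral_ofReal hupint.integrableOn (Eventually.of_forall hu0)]
      simp only [e0]
    rw [integral_eq_lintegral_of_nonneg_ae
      (Eventually.of_forall fun x => mul_nonneg (tsum_nonneg fun i => hg0 i x) (hu0 x))
      (hWc.mul huc).aestronglyMeasurable]
    refine ENNReal.toReal_le_of_le_ofReal (add_nonneg (hQ u hu) hIB) ?_
    rw [← hEe]
    have hterm : ∀ i, ∫⁻ x in Ω, ENNReal.ofReal (g i x * |u x| ^ p) ≤
        ENNReal.ofReal ((1 / 2) ^ i / 2) * E := by
      intro i
      have hC0 : 0 ≤ (C (f i)).toReal := ENNReal.toReal_nonneg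
      calc _ ≤ ∫⁻ x, (Metric.ball (f i) (r (f i))).indicator
            (fun x => ENNReal.ofReal (a i) * ENNReal.ofReal |u x| ^ p) x := by
            refine (setLIntegral_le_lintegral _ _).trans (lintegral_mono fun x => ?_)
            by_cases hx : x ∈ Metric.ball (f i) (r (f i))
            · rw [Set.indicator_of_mem hx, e0, ← ENNReal.ofReal_mul (ha0 i).le]
              exact ENNReal.ofReal_le_ofReal (mul_le_mul_of_nonneg_right (hga i x) (hu0 x))
            · have : g i x = 0 := by
                rw [Metric.mem_ball, not_lt] at hx
                simp only [hgd]
                rw [max_eq_left ((min_le_right _ _).trans (by linarith)), mul_zero]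
              rw [this]; simp
        _ = ENNReal.ofReal (a i) * ∫⁻ x in Metric.ball (f i) (r (f i)), ENNReal.ofReal |u x| ^ p := by
            rw [lintegral_indicator measurableSet_ball, lintegral_const_mul' _ _ ENNReal.ofReal_ne_top]
        _ ≤ ENNReal.ofReal (a i) * (C (f i) * E) := mul_le_mul_right (hest _ (hf i) u hu) _
        _ = ENNReal.ofReal (a i * (C (f i)).toReal) * E := by
            rw [ENNReal.ofReal_mul (ha0 i).le, ENNReal.ofReal_toReal (hC _ (hf i)), mul_assoc]
        _ ≤ _ := by
            refine mul_le_mul_left (ENNReal.ofReal_le_ofReal ?_) _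
            simp only [ha]
            rw [div_mul_eq_mul_div]
            refine (div_le_iff₀ (by linarith)).2 ?_
            exact mul_le_mul_of_nonneg_left (by linarith) (by positivity)
    calc _ = ∫⁻ x in Ω, ∑' i, ENNReal.ofReal (g i x * |u x| ^ p) := by
          refine lintegral_congr fun x => ?_
          rw [← tsum_mul_right, ENNReal.ofReal_tsum_of_nonneg
            (fun i => mul_nonneg (hg0 i x) (hu0 x)) ((hgs x).mul_right _)]
      _ = ∑' i, ∫⁻ x in Ω, ENNReal.ofReal (g i x * |u x| ^ p) :=
          lintegral_tsum fun i => ((hgc i).mul huc).measurable.ennreal_ofReal.aemeasurable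
      _ ≤ ∑' i : ℕ, ENNReal.ofReal ((1 / 2) ^ i / 2) * E := ENNReal.tsum_le_tsum hterm
      _ = E := by
          rw [ENNReal.tsum_mul_right, ← ENNReal.ofReal_tsum_of_nonneg (fun i => by positivity) hsum,
            tsum_div_const, tsum_geometric_of_lt_one (by norm_num) (by norm_num)]
          norm_num

/-- If `Q ≥ 0` admits a ground state, then for every nonempty open `B ⋐ Ω` there is a
positive continuous weight `W` on `Ω` with `∫_Ω W|u|^p ≤ Q(u) + ∫_B |u|^p` for all
test functions `u`. -/
theorem weight_bound_of_groundState {d : ℕ} (hd : 2 ≤ d)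
    (Ω : Set (Euc d)) (hΩo : IsOpen Ω) (hΩc : IsConnected Ω)
    {p : ℝ} (hp₁ : 1 < p) (V : Euc d → ℝ) (hV : LocBddPotential Ω V)
    (hQ : ∀ u : Euc d → ℝ, IsTestFun Ω u → 0 ≤ energyQ Ω V p u)
    (v : Euc d → ℝ) (hv : IsGroundState Ω V p v)
    (B : Set (Euc d)) (hBo : IsOpen B) (hBne : B.Nonempty)
    (hBc : IsCompact (closure B)) (hBΩ : closure B ⊆ Ω) :
    ∃ W : Euc d → ℝ, ContinuousOn W Ω ∧ (∀ x ∈ Ω, 0 < W x) ∧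
      ∀ u : Euc d → ℝ, IsTestFun Ω u →
        (∫ x in Ω, W x * |u x| ^ p) ≤ energyQ Ω V p u + ∫ x in B, |u x| ^ p := by
  exact exists_weight hΩo hΩc.nonempty hp₁ hQ
    (all_good hΩo hΩc hp₁ hV hQ hv hBo hBne hBΩ)
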